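/- arXiv:2105.02442 — 2 statements merged into one kernel-verified Lean document; each statement's English description precedes it below -/
import Mathlib

section
/- Let F_q be a finite field of odd characteristic p and let β ∈ F_q with β ≠ 0. Let F_0 be the subfield of F_q generated by β², and let x = [[1,0],[β,1]] and y = [[1,β],[0,1]] in SL_2(F_q). Then the subgroup H = ⟨x, y⟩ of SL_2(F_q) either is isomorphic to SL_2(F_0), or |F_0| = 9 and H is isomorphic to a subgroup of SL_2(F_0) whose image modulo the center of SL_2(F_0) is isomorphic to the alternating group A_5, and H contains a subgroup isomorphic to SL_2(F_p). In all cases H contains a subgroup isomorphic to SL_2(F_p) and, in particular, H contains the matrix −1 (the unique element of order 2 in SL_2(F_q)). -/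
/-!
Put `l = β ^ 2` and let `k` be the field generated by `l`. Conjugation by `diag(1, β⁻¹)` carries
`SL₂(k)` into `SL₂(F)` and sends the upper transvection `uu 1` to `y` and the lower transvection
`vv l` to `x` (`twist`), so `H` is a copy of the group `G = ⟨uu 1, vv l⟩ ≤ SL₂(k)`. This is the
situation of Dickson's theorem on groups generated by two opposite transvections (`dickson`).

The group `Γ = G ∪ -G`, viewed over an algebraic closure `K` of `k`, acts on the projective line
`K ∪ {∞}`. Every noncentral element fixes two points, or just one if its trace is `±2`; in the
latter case the fixed point lies in the orbit of `∞`, by Sylow's argument in the guise of a fixed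
point count modulo `p` (`one_fix_orb`). Let `q` be the number of translations `uu a` in `Γ`. Counting
pairs (noncentral element, fixed point) shows that there is exactly one further orbit of points with
noncentral stabilizer (`orbit_count`, `orbit_structure`), and the orders of the orbits and stabilizers
satisfy an equation whose only solutions are the following (`arith`).

* The orbit of `∞` has `1 + q` points. Then it consists of `∞` and of the `a` with `uu a ∈ Γ`. These
  `a` form an additive group `U` containing `1`, and since `Γ` contains an element `z ↦ κ / z`, Hua's
  identity makes `U` a subfield (`hua_mul`, `subfield_of_small_orbit`). It contains `l`, so `G`
  contains all translations of `SL₂(k)`, hence is everything.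
* `q = 3`, `|Γ| = 120`, and every element of trace different from `±2` satisfies `g ^ 10 = 1` or
  `g ^ 12 = 1`. Applied to the traces `2 ± l` of `uu (±1) * vv l` this leaves `l = ±1`, where `k` is
  the prime field and again `G = SL₂(k)`, or `l ^ 2 = -1` (`subfield_or_exceptional`).

If `l ^ 2 = -1` in characteristic three, then `k` has nine elements and `-1 = (uu 1 * vv l) ^ 5`
lies in `G`. The group `G` permutes five explicit Hermitian forms over `k` (`herm`); its generators act as
two three-cycles generating `A₅`, and by `|G| = 120` the kernel is `{1, -1}`, the intersection of `G`
with the center (`exceptional_image`). Finally `(vv l)⁻¹ * uu 1 * vv l` equals `uu l * vv 1 * (uu l)⁻¹`, so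
that `G` contains the conjugate by `uu l` of the standard `SL₂(F₃)` (`exc_conj`).
-/

open Matrix

/-- The element `-1` of `SL_2(F)`. -/
def negOneSL (F : Type) [Field F] : Matrix.SpecialLinearGroup (Fin 2) F :=
  ⟨-1, by simp [Matrix.det_neg]⟩

/-! ### Counting fixed points of a finite group with a central involution -/

section Counting

variable {Γ P : Type*} [Group Γ] [Fintype Γ] [MulAction Γ P] [DecidableEq P]

/-- The orbit of a point under a finite group, as a finset. -/
def orb (Γ : Type*) {P : Type*} [Group Γ] [Fintype Γ] [MulAction Γ P] [DecidableEq P]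
    (a : P) : Finset P :=
  Finset.univ.image fun g : Γ => g • a

/-- The elements of a finite group fixing a point, as a finset. -/
def stb (Γ : Type*) {P : Type*} [Group Γ] [Fintype Γ] [MulAction Γ P] [DecidableEq P]
    (a : P) : Finset Γ :=
  Finset.univ.filter fun g : Γ => g • a = a

lemma mem_orb {a b : P} : b ∈ orb Γ a ↔ ∃ g : Γ, g • a = b := by simp [orb]

lemma mem_stb {a : P} {g : Γ} : g ∈ stb Γ a ↔ g • a = a := by simp [stb]

lemma self_mem_orb (a : P) : a ∈ orb Γ a := mem_orb.2 ⟨1, one_smul _ _⟩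

lemma smul_mem_orb {a b : P} (g : Γ) (hb : b ∈ orb Γ a) : g • b ∈ orb Γ a := by
  obtain ⟨h, rfl⟩ := mem_orb.1 hb
  exact mem_orb.2 ⟨g * h, mul_smul _ _ _⟩

lemma card_orb_mul_card_stb (a : P) : (orb Γ a).card * (stb Γ a).card = Fintype.card Γ := by
  have : Fintype (MulAction.orbit Γ a) := (Set.finite_range _).fintype
  have : Fintype (MulAction.stabilizer Γ a) := Fintype.ofFinite _
  have h := MulAction.card_orbit_mul_card_stabilizer_eq_card_group Γ a
  rw [← h]
  congr 1
  · rw [← Set.toFinset_card]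
    congr 1
    ext b
    simp [mem_orb, MulAction.mem_orbit_iff]
  · rw [← Fintype.card_coe]
    exact Fintype.card_congr (Equiv.subtypeEquivRight fun g => by simp [mem_stb])

lemma card_stb_smul (a : P) (g : Γ) : (stb Γ (g • a)).card = (stb Γ a).card := by
  refine Finset.card_bij' (fun h _ => g⁻¹ * h * g) (fun h _ => g * h * g⁻¹) ?_ ?_ ?_ ?_
  · intro h hh
    rw [mem_stb] at hh ⊢
    rw [mul_smul, mul_smul, hh, inv_smul_smul]
  · intro h hh
    rw [mem_stb] at hh ⊢
    rw [mul_smul, mul_smul, inv_smul_smul, hh]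
  · intro h _; group
  · intro h _; group

/-- A stabilizer containing an involution `c` and a third nontrivial element has at least four
elements, being of even order. -/
lemma four_le_card_stb {a : P} {c g : Γ} (hc : c ≠ 1) (hc2 : c * c = 1) (hca : c • a = a)
    (hg1 : g ≠ 1) (hgc : g ≠ c) (hga : g • a = a) : 4 ≤ (stb Γ a).card := by
  classical
  have : ({1, c, g, c * g} : Finset Γ) ⊆ stb Γ a := by
    intro h hh
    simp only [Finset.mem_insert, Finset.mem_singleton] at hh
    rw [mem_stb]
    rcases hh with rfl | rfl | rfl | rfl
    · exact one_smul _ _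
    · exact hca
    · exact hga
    · rw [mul_smul, hga, hca]
  refine le_trans (le_of_eq ?_) (Finset.card_le_card this)
  rw [Finset.card_insert_of_notMem, Finset.card_insert_of_notMem, Finset.card_insert_of_notMem,
    Finset.card_singleton]
  · exact Finset.notMem_singleton.2 fun h => hc (mul_right_cancel (b := g) (by rw [← h, one_mul]))
  · simp only [Finset.mem_insert, Finset.mem_singleton, not_or]
    exact ⟨Ne.symm hgc, fun h => hg1 (mul_left_cancel (a := c) (by rw [← h, mul_one]))⟩
  · simp only [Finset.mem_insert, Finset.mem_singleton, not_or]
    refine ⟨Ne.symm hc, Ne.symm hg1, fun h => hgc ?_⟩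
    calc g = c * c * g := by rw [hc2, one_mul]
      _ = c * (c * g) := mul_assoc _ _ _
      _ = c := by rw [← h, mul_one]

/-- Counting pairs (element different from `1` and `c`, fixed point). Elements of `E` have a single
fixed point, lying in the orbit of `o`; the others have two. The points outside the orbit of `o`
whose stabilizer is larger than `{1, c}` then form one orbit of known size. -/
theorem orbit_count (c : Γ) (hc : c ≠ 1) (hc2 : c * c = 1) (hcc : ∀ g : Γ, c * g = g * c)
    (hcP : ∀ a : P, c • a = a)
    (E : Finset Γ) (hE1 : 1 ∉ E) (hEc : c ∉ E)
    (hEconj : ∀ g h : Γ, h ∈ E → g * h * g⁻¹ ∈ E) (o : P)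
    (hone : ∀ g ∈ E, ∃ a ∈ orb Γ o, ∀ b : P, g • b = b ↔ b = a)
    (htwo : ∀ g : Γ, g ≠ 1 → g ≠ c → g ∉ E → ∃ a a' : P, a ≠ a' ∧ ∀ b, g • b = b ↔ b = a ∨ b = a')
    (e : ℕ) (he : (E.filter fun g => g • o = o).card = e) (he2 : 2 ≤ e)
    (hes : e + 2 ≤ (stb Γ o).card) (hN : 2 ≤ (orb Γ o).card) :
    ∃ b : P, b ∉ orb Γ o ∧
      2 * (orb Γ b).card = 4 + (orb Γ o).card * (e - 2) ∧
      ∀ g : Γ, g ≠ 1 → g ≠ c → ∀ a : P, g • a = a → a ∈ orb Γ o ∨ a ∈ orb Γ b := by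
  classical
  set Nz : Finset Γ := Finset.univ.filter fun g => g ≠ 1 ∧ g ≠ c with hNz
  have hfin : ∀ g : Γ, g ∈ Nz → ∃ S : Finset P, (∀ b, b ∈ S ↔ g • b = b) ∧
      S.card = if g ∈ E then 1 else 2 := by
    intro g hg
    simp only [hNz, Finset.mem_filter, Finset.mem_univ, true_and] at hg
    split_ifs with h
    · obtain ⟨a, -, ha⟩ := hone g h
      exact ⟨{a}, fun b => by rw [ha, Finset.mem_singleton], by simp⟩
    · obtain ⟨a, a', haa, ha⟩ := htwo g hg.1 hg.2 h
      exact ⟨{a, a'}, fun b => by rw [ha]; simp, Finset.card_pair haa⟩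
  choose! S hS hScard using hfin
  set X : Finset P := Nz.biUnion S with hX
  have hmemX : ∀ a, a ∈ X ↔ ∃ g : Γ, (g ≠ 1 ∧ g ≠ c) ∧ g • a = a := by
    intro a
    simp only [hX, Finset.mem_biUnion]
    refine exists_congr fun g => ?_
    constructor
    · rintro ⟨hg, h⟩
      exact ⟨by simpa [hNz] using hg, (hS g hg a).1 h⟩
    · rintro ⟨hg, h⟩
      have hg : g ∈ Nz := by simpa [hNz] using hg
      exact ⟨hg, (hS g hg a).2 h⟩
  have hEN : E ⊆ Nz := by
    intro g hg
    simp only [hNz, Finset.mem_filter, Finset.mem_univ, true_and]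
    exact ⟨fun h => hE1 (h ▸ hg), fun h => hEc (h ▸ hg)⟩
  have hNzcard : Nz.card + 2 = Fintype.card Γ := by
    have : Nz = Finset.univ \ {1, c} := by
      ext g; simp [hNz]
    rw [this, ← Finset.card_pair (Ne.symm hc), Finset.card_sdiff_add_card_eq_card]
    · rfl
    · exact Finset.subset_univ _
  -- the number of noncentral elements fixing a point
  have hw : ∀ a : P, (Nz.filter fun g => g • a = a).card + 2 = (stb Γ a).card := by
    intro a
    have : (Nz.filter fun g => g • a = a) = stb Γ a \ {1, c} := by
      ext g; simp [hNz, mem_stb]; tauto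
    rw [this, ← Finset.card_pair (Ne.symm hc), Finset.card_sdiff_add_card_eq_card]
    intro g hg
    rw [mem_stb]
    rcases Finset.mem_insert.1 hg with rfl | hg
    · exact one_smul _ _
    · rw [Finset.mem_singleton.1 hg, hcP]
  -- `#E` by counting the pairs (element of `E`, point of the orbit of `o` it fixes)
  have hEcard : E.card = (orb Γ o).card * e := by
    have h1 := Finset.sum_card_bipartiteAbove_eq_sum_card_bipartiteBelow
      (s := E) (t := orb Γ o) (fun (g : Γ) (a : P) => g • a = a)
    have h2 : ∀ g ∈ E, (Finset.bipartiteAbove (fun (g : Γ) (a : P) => g • a = a)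
        (orb Γ o) g).card = 1 := by
      intro g hg
      obtain ⟨a, ha, hab⟩ := hone g hg
      rw [Finset.card_eq_one]
      refine ⟨a, ?_⟩
      ext b
      simp only [Finset.mem_bipartiteAbove, hab, Finset.mem_singleton]
      exact ⟨fun h => h.2, fun h => ⟨h ▸ ha, h⟩⟩
    have h3 : ∀ a ∈ orb Γ o, (Finset.bipartiteBelow (fun (g : Γ) (a : P) => g • a = a)
        E a).card = e := by
      intro a ha
      obtain ⟨k, rfl⟩ := mem_orb.1 ha
      rw [← he]
      refine Finset.card_bij' (fun h _ => k⁻¹ * h * k) (fun h _ => k * h * k⁻¹) ?_ ?_ ?_ ?_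
      · intro h hh
        simp only [Finset.mem_bipartiteBelow, Finset.mem_filter] at hh ⊢
        refine ⟨by simpa using hEconj k⁻¹ h hh.1, ?_⟩
        rw [mul_smul, mul_smul, hh.2, inv_smul_smul]
      · intro h hh
        simp only [Finset.mem_bipartiteBelow, Finset.mem_filter] at hh ⊢
        refine ⟨hEconj k h hh.1, ?_⟩
        rw [mul_smul, mul_smul, inv_smul_smul, hh.2]
      · intro h _; group
      · intro h _; group
    rw [Finset.sum_congr rfl h2, Finset.sum_congr rfl h3] at h1
    simpa using h1
  -- the total count of pairs (noncentral element, fixed point)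
  have hsum : ∑ a ∈ X, (Nz.filter fun g => g • a = a).card + E.card = 2 * Nz.card := by
    have h1 := Finset.sum_card_bipartiteAbove_eq_sum_card_bipartiteBelow
      (s := Nz) (t := X) (fun (g : Γ) (a : P) => g • a = a)
    have h2 : ∀ g ∈ Nz, (Finset.bipartiteAbove (fun (g : Γ) (a : P) => g • a = a)
        X g).card = if g ∈ E then 1 else 2 := by
      intro g hg
      rw [← hScard g hg]
      congr 1
      ext b
      simp only [Finset.mem_bipartiteAbove, hS g hg]
      refine ⟨fun h => h.2, fun h => ⟨(hmemX b).2 ⟨g, by simpa [hNz] using hg, h⟩, h⟩⟩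
    rw [Finset.sum_congr rfl h2] at h1
    have h3 : ∑ a ∈ X, (Nz.filter fun g => g • a = a).card =
        ∑ g ∈ Nz, if g ∈ E then 1 else 2 := h1.symm
    have h4 : E.card = ∑ g ∈ Nz, if g ∈ E then 1 else 0 := by
      rw [← Finset.card_filter]
      congr 1
      ext g
      simp only [Finset.mem_filter]
      exact ⟨fun h => ⟨hEN h, h⟩, fun h => h.2⟩
    rw [h3, h4, ← Finset.sum_add_distrib, mul_comm, ← smul_eq_mul, ← Finset.sum_const]
    refine Finset.sum_congr rfl fun g _ => ?_
    split_ifs <;> rfl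
  -- the contribution of an orbit
  have horb : ∀ a : P, ∑ b ∈ orb Γ a, (Nz.filter fun g => g • b = b).card + 2 * (orb Γ a).card
      = Fintype.card Γ := by
    intro a
    rw [← card_orb_mul_card_stb a, mul_comm 2, ← smul_eq_mul, ← smul_eq_mul, ← Finset.sum_const,
      ← Finset.sum_const, ← Finset.sum_add_distrib]
    refine Finset.sum_congr rfl fun b hb => ?_
    obtain ⟨k, rfl⟩ := mem_orb.1 hb
    rw [hw, card_stb_smul]
  have hXinv : ∀ (g : Γ) a, a ∈ X → g • a ∈ X := by
    intro g a ha
    obtain ⟨h, ⟨h1, hhc⟩, hha⟩ := (hmemX a).1 ha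
    refine (hmemX _).2 ⟨g * h * g⁻¹, ⟨fun h' => h1 ?_, fun h' => hhc ?_⟩, ?_⟩
    · exact conj_eq_one_iff.1 h'
    · rw [mul_inv_eq_iff_eq_mul, hcc] at h'
      exact mul_left_cancel h'
    · rw [mul_smul, mul_smul, inv_smul_smul, hha]
  have horbX : ∀ a ∈ X, orb Γ a ⊆ X := by
    intro a ha b hb
    obtain ⟨k, rfl⟩ := mem_orb.1 hb
    exact hXinv k a ha
  have hoX : o ∈ X := by
    have : (E.filter fun g => g • o = o).Nonempty := Finset.card_pos.1 (by omega)
    obtain ⟨g, hg⟩ := this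
    rw [Finset.mem_filter] at hg
    have := hEN hg.1
    exact (hmemX o).2 ⟨g, by simpa [hNz] using this, hg.2⟩
  set Y : Finset P := X \ orb Γ o with hY
  have hYorb : ∀ a ∈ Y, orb Γ a ⊆ Y := by
    intro a ha b hb
    rw [hY, Finset.mem_sdiff] at ha ⊢
    refine ⟨horbX a ha.1 hb, fun h => ha.2 ?_⟩
    obtain ⟨k, rfl⟩ := mem_orb.1 hb
    simpa using smul_mem_orb k⁻¹ h
  -- each orbit in `X` has stabilizers of order at least four, hence contributes at least `|Γ| / 2`
  have hfour : ∀ a ∈ X, 4 * (orb Γ a).card ≤ Fintype.card Γ := by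
    intro a ha
    obtain ⟨g, ⟨h1, h2⟩, h3⟩ := (hmemX a).1 ha
    rw [← card_orb_mul_card_stb a, mul_comm]
    exact Nat.mul_le_mul_left _ (four_le_card_stb hc hc2 (hcP a) h1 h2 h3)
  have hsplit : ∑ a ∈ Y, (Nz.filter fun g => g • a = a).card +
      ∑ a ∈ orb Γ o, (Nz.filter fun g => g • a = a).card =
      ∑ a ∈ X, (Nz.filter fun g => g • a = a).card := Finset.sum_sdiff (horbX o hoX)
  obtain ⟨d, rfl⟩ : ∃ d, e = d + 2 := ⟨e - 2, by omega⟩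
  have hYsum : ∑ a ∈ Y, (Nz.filter fun g => g • a = a).card + 4 + (orb Γ o).card * d =
      Fintype.card Γ := by
    have h1 := horb o
    rw [mul_add] at hEcard
    omega
  have hbig : (orb Γ o).card * (d + 4) ≤ Fintype.card Γ := by
    rw [← card_orb_mul_card_stb o]
    exact Nat.mul_le_mul_left _ (by omega)
  rw [mul_add] at hbig
  have hYne : Y.Nonempty := by
    rw [Finset.nonempty_iff_ne_empty]
    intro h
    rw [h, Finset.sum_empty] at hYsum
    omega
  obtain ⟨b, hb⟩ := hYne
  have hbX : b ∈ X := (Finset.mem_sdiff.1 hb).1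
  have hYeq : Y = orb Γ b := by
    refine Finset.Subset.antisymm ?_ (hYorb b hb)
    intro b' hb'
    by_contra hbb
    have hb'X : b' ∈ X := (Finset.mem_sdiff.1 hb').1
    have hdisj : Disjoint (orb Γ b) (orb Γ b') := by
      rw [Finset.disjoint_left]
      intro a ha ha'
      obtain ⟨k, rfl⟩ := mem_orb.1 ha'
      exact hbb (by simpa using smul_mem_orb k⁻¹ ha)
    have hle : ∑ a ∈ orb Γ b ∪ orb Γ b', (Nz.filter fun g => g • a = a).card ≤
        ∑ a ∈ Y, (Nz.filter fun g => g • a = a).card :=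
      Finset.sum_le_sum_of_subset (Finset.union_subset (hYorb b hb) (hYorb b' hb'))
    rw [Finset.sum_union hdisj] at hle
    have h1 := horb b
    have h2 := horb b'
    have h3 := hfour b hbX
    have h4 := hfour b' hb'X
    omega
  refine ⟨b, (Finset.mem_sdiff.1 hb).2, ?_, ?_⟩
  · have h1 := horb b
    rw [← hYeq] at h1
    rw [hYeq] at h1 hYsum
    simp only [Nat.add_sub_cancel]
    omega
  · intro g h1 h2 a ha
    have haX : a ∈ X := (hmemX a).2 ⟨g, ⟨h1, h2⟩, ha⟩
    by_cases hao : a ∈ orb Γ o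
    · exact Or.inl hao
    · right
      rw [← hYeq, hY, Finset.mem_sdiff]
      exact ⟨haX, hao⟩

end Counting

/-! ### `SL₂` acting on the projective line -/

section Moebius

variable {K : Type*} [Field K]

/-- The upper unipotent matrix with entry `a`. -/
def uu (a : K) : SpecialLinearGroup (Fin 2) K := ⟨!![1, a; 0, 1], by simp⟩

/-- The lower unipotent matrix with entry `a`. -/
def vv (a : K) : SpecialLinearGroup (Fin 2) K := ⟨!![1, 0; a, 1], by simp⟩

@[simp] lemma uu_00 (a : K) : uu a 0 0 = 1 := rfl
@[simp] lemma uu_01 (a : K) : uu a 0 1 = a := rfl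
@[simp] lemma uu_10 (a : K) : uu a 1 0 = 0 := rfl
@[simp] lemma uu_11 (a : K) : uu a 1 1 = 1 := rfl
@[simp] lemma vv_00 (a : K) : vv a 0 0 = 1 := rfl
@[simp] lemma vv_01 (a : K) : vv a 0 1 = 0 := rfl
@[simp] lemma vv_10 (a : K) : vv a 1 0 = a := rfl
@[simp] lemma vv_11 (a : K) : vv a 1 1 = 1 := rfl

lemma sl2_ext {A B : SpecialLinearGroup (Fin 2) K} (h00 : A 0 0 = B 0 0) (h01 : A 0 1 = B 0 1)
    (h10 : A 1 0 = B 1 0) (h11 : A 1 1 = B 1 1) : A = B := by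
  ext i j
  fin_cases i <;> fin_cases j <;> assumption

lemma sl2_det (g : SpecialLinearGroup (Fin 2) K) : g 0 0 * g 1 1 - g 0 1 * g 1 0 = 1 := by
  have := g.det_coe
  rwa [det_fin_two] at this

lemma mul_00 (g h : SpecialLinearGroup (Fin 2) K) :
    (g * h) 0 0 = g 0 0 * h 0 0 + g 0 1 * h 1 0 := by
  simp [Matrix.mul_apply, Fin.sum_univ_two]
lemma mul_01 (g h : SpecialLinearGroup (Fin 2) K) :
    (g * h) 0 1 = g 0 0 * h 0 1 + g 0 1 * h 1 1 := by
  simp [Matrix.mul_apply, Fin.sum_univ_two]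
lemma mul_10 (g h : SpecialLinearGroup (Fin 2) K) :
    (g * h) 1 0 = g 1 0 * h 0 0 + g 1 1 * h 1 0 := by
  simp [Matrix.mul_apply, Fin.sum_univ_two]
lemma mul_11 (g h : SpecialLinearGroup (Fin 2) K) :
    (g * h) 1 1 = g 1 0 * h 0 1 + g 1 1 * h 1 1 := by
  simp [Matrix.mul_apply, Fin.sum_univ_two]
lemma inv_00 (g : SpecialLinearGroup (Fin 2) K) : g⁻¹ 0 0 = g 1 1 := by
  rw [SpecialLinearGroup.SL2_inv_expl]; rfl
lemma inv_01 (g : SpecialLinearGroup (Fin 2) K) : g⁻¹ 0 1 = -g 0 1 := by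
  rw [SpecialLinearGroup.SL2_inv_expl]; rfl
lemma inv_10 (g : SpecialLinearGroup (Fin 2) K) : g⁻¹ 1 0 = -g 1 0 := by
  rw [SpecialLinearGroup.SL2_inv_expl]; rfl
lemma inv_11 (g : SpecialLinearGroup (Fin 2) K) : g⁻¹ 1 1 = g 0 0 := by
  rw [SpecialLinearGroup.SL2_inv_expl]; rfl
lemma neg_ij (g : SpecialLinearGroup (Fin 2) K) (i j : Fin 2) : (-g) i j = -g i j := rfl
lemma one_00 : (1 : SpecialLinearGroup (Fin 2) K) 0 0 = 1 := rfl
lemma one_01 : (1 : SpecialLinearGroup (Fin 2) K) 0 1 = 0 := rfl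
lemma one_10 : (1 : SpecialLinearGroup (Fin 2) K) 1 0 = 0 := rfl
lemma one_11 : (1 : SpecialLinearGroup (Fin 2) K) 1 1 = 1 := rfl

lemma uu_add (a b : K) : uu (a + b) = uu a * uu b := by
  apply sl2_ext <;> simp only [mul_00, mul_01, mul_10, mul_11, uu_00, uu_01, uu_10, uu_11] <;> ring

lemma uu_zero : uu (0 : K) = 1 := by
  apply sl2_ext <;> rfl

lemma uu_neg (a : K) : uu (-a) = (uu a)⁻¹ := by
  rw [eq_inv_iff_mul_eq_one, ← uu_add, neg_add_cancel, uu_zero]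

lemma vv_add (a b : K) : vv (a + b) = vv a * vv b := by
  apply sl2_ext <;> simp only [mul_00, mul_01, mul_10, mul_11, vv_00, vv_01, vv_10, vv_11] <;> ring

lemma vv_zero : vv (0 : K) = 1 := by
  apply sl2_ext <;> rfl

lemma vv_neg (a : K) : vv (-a) = (vv a)⁻¹ := by
  rw [eq_inv_iff_mul_eq_one, ← vv_add, neg_add_cancel, vv_zero]

variable [DecidableEq K]

instance decEqOnePoint : DecidableEq (OnePoint K) := inferInstanceAs (DecidableEq (Option K))

/-- `SL₂(K)` acts on the projective line `K ∪ {∞}` by Möbius transformations. -/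
noncomputable instance slOnePoint : MulAction (SpecialLinearGroup (Fin 2) K) (OnePoint K) :=
  MulAction.compHom _ (SpecialLinearGroup.toGL (n := Fin 2) (R := K))

lemma sl_smul_def (g : SpecialLinearGroup (Fin 2) K) (z : OnePoint K) :
    g • z = SpecialLinearGroup.toGL g • z := rfl

open OnePoint in
lemma sl_smul_infty (g : SpecialLinearGroup (Fin 2) K) :
    g • (∞ : OnePoint K) = if g 1 0 = 0 then ∞ else ((g 0 0 / g 1 0 : K) : OnePoint K) := by
  rw [sl_smul_def, smul_infty_eq_ite]; rfl

open OnePoint in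
lemma sl_smul_some (g : SpecialLinearGroup (Fin 2) K) (z : K) :
    g • (z : OnePoint K) = if g 1 0 * z + g 1 1 = 0 then ∞ else
      (((g 0 0 * z + g 0 1) / (g 1 0 * z + g 1 1) : K) : OnePoint K) := by
  rw [sl_smul_def, smul_some_eq_ite]; rfl

open OnePoint in
lemma fix_infty (g : SpecialLinearGroup (Fin 2) K) : g • (∞ : OnePoint K) = ∞ ↔ g 1 0 = 0 := by
  rw [sl_smul_infty]; split_ifs with h <;> simp [h]

open OnePoint in
lemma fix_some (g : SpecialLinearGroup (Fin 2) K) (z : K) :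
    g • (z : OnePoint K) = z ↔ g 1 0 * z ^ 2 + (g 1 1 - g 0 0) * z - g 0 1 = 0 := by
  have hd := sl2_det g
  rw [sl_smul_some]
  split_ifs with h
  · refine ⟨fun h' => (infty_ne_coe _ h').elim, fun h' => ?_⟩
    grind
  · rw [OnePoint.coe_eq_coe, div_eq_iff h]
    constructor <;> intro h' <;> linear_combination -h'

open OnePoint in
lemma neg_one_smul_pt (z : OnePoint K) : (-1 : SpecialLinearGroup (Fin 2) K) • z = z := by
  induction z using OnePoint.rec with
  | infty => rw [fix_infty, neg_ij, one_10, neg_zero]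
  | coe z =>
    rw [fix_some, neg_ij, neg_ij, neg_ij, neg_ij, one_00, one_01, one_10, one_11]; ring

lemma uu_smul (a z : K) : uu a • (z : OnePoint K) = ((z + a : K) : OnePoint K) := by
  rw [sl_smul_some]; simp

/-- An element `≠ ±1` of trace `±2` fixes exactly one point of the projective line. -/
lemma one_fix (h2 : (2 : K) ≠ 0) (g : SpecialLinearGroup (Fin 2) K) (h1 : g ≠ 1) (hm : g ≠ -1)
    (ht : (g 0 0 + g 1 1) ^ 2 = 4) : ∃ a : OnePoint K, ∀ b : OnePoint K, g • b = b ↔ b = a := by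
  have hd := sl2_det g
  by_cases hc : g 1 0 = 0
  · have hda : g 0 0 = g 1 1 := by
      have : (g 0 0 - g 1 1) ^ 2 = 0 := by rw [hc] at hd; linear_combination ht - 4 * hd
      exact sub_eq_zero.1 (pow_eq_zero_iff (two_ne_zero) |>.1 this)
    have hb : g 0 1 ≠ 0 := by
      intro hb
      have : (g 0 0 - 1) * (g 0 0 + 1) = 0 := by rw [hc, ← hda] at hd; linear_combination hd
      rcases mul_eq_zero.1 this with h | h
      · apply h1; apply sl2_ext <;> simp only [one_00, one_01, one_10, one_11, hb, hc, ← hda] <;>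
          linear_combination h
      · apply hm; apply sl2_ext <;> simp only [neg_ij, one_00, one_01, one_10, one_11, hb, hc, ← hda]
          <;> first | linear_combination h | simp
    refine ⟨OnePoint.infty, fun b => ?_⟩
    induction b using OnePoint.rec with
    | infty => simp [fix_infty, hc]
    | coe z =>
      rw [fix_some, hc, hda]
      simpa using hb
  · refine ⟨(((g 0 0 - g 1 1) / (2 * g 1 0) : K) : OnePoint K), fun b => ?_⟩
    induction b using OnePoint.rec with
    | infty => simp [fix_infty, hc]
    | coe z =>
      rw [fix_some, OnePoint.coe_eq_coe, eq_div_iff (mul_ne_zero h2 hc), ← sub_eq_zero (a := z * _)]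
      rw [← mul_right_inj' (mul_ne_zero (mul_ne_zero h2 h2) hc), mul_zero,
        ← pow_eq_zero_iff (two_ne_zero) (a := z * (2 * g 1 0) - (g 0 0 - g 1 1))]
      constructor <;> intro h
      · linear_combination h + ht - 4 * hd
      · linear_combination h - ht + 4 * hd

/-- Over an algebraically closed field, an element of trace `≠ ±2` fixes exactly two points. -/
lemma two_fix [IsAlgClosed K] (h2 : (2 : K) ≠ 0) (g : SpecialLinearGroup (Fin 2) K)
    (ht : (g 0 0 + g 1 1) ^ 2 ≠ 4) :
    ∃ a a' : OnePoint K, a ≠ a' ∧ ∀ b : OnePoint K, g • b = b ↔ b = a ∨ b = a' := by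
  have hd := sl2_det g
  by_cases hc : g 1 0 = 0
  · have hda : g 1 1 - g 0 0 ≠ 0 := by
      intro h
      apply ht
      rw [hc] at hd
      linear_combination (g 1 1 - g 0 0) * h + 4 * hd
    refine ⟨OnePoint.infty, ((g 0 1 / (g 1 1 - g 0 0) : K) : OnePoint K), by simp, fun b => ?_⟩
    induction b using OnePoint.rec with
    | infty => simp [fix_infty, hc]
    | coe z =>
      rw [fix_some, hc]
      simp only [OnePoint.coe_ne_infty, false_or, OnePoint.coe_eq_coe, eq_div_iff hda]
      constructor <;> intro h <;> linear_combination h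
  · obtain ⟨r, hr⟩ := IsAlgClosed.exists_pow_nat_eq ((g 0 0 + g 1 1) ^ 2 - 4) two_pos
    have hr0 : r ≠ 0 := by
      rintro rfl
      apply ht
      linear_combination -hr
    have h2c := mul_ne_zero h2 hc
    refine ⟨(((g 0 0 - g 1 1 + r) / (2 * g 1 0) : K) : OnePoint K),
      (((g 0 0 - g 1 1 - r) / (2 * g 1 0) : K) : OnePoint K), ?_, fun b => ?_⟩
    · rw [Ne, OnePoint.coe_eq_coe, div_left_inj' h2c]
      intro h
      apply mul_ne_zero h2 hr0
      linear_combination h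
    · induction b using OnePoint.rec with
      | infty => simp [fix_infty, hc]
      | coe z =>
        rw [fix_some, OnePoint.coe_eq_coe, OnePoint.coe_eq_coe, eq_div_iff h2c, eq_div_iff h2c,
          ← sub_eq_zero (a := z * _), ← sub_eq_zero (a := z * _) (b := _ - r), ← mul_eq_zero,
          ← mul_right_inj' (mul_ne_zero (mul_ne_zero h2 h2) hc), mul_zero]
        constructor <;> intro h
        · linear_combination h - hr - 4 * hd
        · linear_combination h + hr + 4 * hd

/-- In characteristic `p`, the `p`-th power of an element of trace `±2` acts trivially on the
projective line: if `ε` is half the trace then `(g - ε)² = 0`, so `g ^ p = ε ^ p = ±1`. -/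
lemma pow_char_smul (p : ℕ) [hp : Fact p.Prime] [CharP K p] (h2 : (2 : K) ≠ 0)
    (g : SpecialLinearGroup (Fin 2) K)
    (ht : (g 0 0 + g 1 1) ^ 2 = 4) (z : OnePoint K) : g ^ p • z = z := by
  have hd := sl2_det g
  set ε : K := (g 0 0 + g 1 1) / 2 with hε
  have hεt : g 0 0 + g 1 1 = 2 * ε := by rw [hε]; field_simp
  have hε2 : ε ^ 2 = 1 := by
    have h4 : (4 : K) ≠ 0 := by
      have := mul_ne_zero h2 h2; norm_num at this; exact this
    apply mul_left_cancel₀ h4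
    rw [hεt] at ht
    linear_combination ht
  have hsq : ((g : Matrix (Fin 2) (Fin 2) K) - scalar (Fin 2) ε) ^ 2 = 0 := by
    ext i j
    fin_cases i <;> fin_cases j <;> simp [pow_two, Matrix.mul_apply, Fin.sum_univ_two] <;>
      grind
  have hp2 : 2 ≤ p := hp.out.two_le
  have hpow : (g : Matrix (Fin 2) (Fin 2) K) ^ p = scalar (Fin 2) (ε ^ p) := by
    have h1 : ((g : Matrix (Fin 2) (Fin 2) K) - scalar (Fin 2) ε) ^ p = 0 := by
      obtain ⟨k, rfl⟩ := Nat.exists_eq_add_of_le hp2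
      rw [pow_add, hsq, zero_mul]
    rw [sub_pow_char_of_commute p (Matrix.scalar_commute ε (fun r => Commute.all _ _) _).symm,
      ← map_pow, sub_eq_zero] at h1
    exact h1
  have hεp : ε ^ p = 1 ∨ ε ^ p = -1 := by
    rw [← mul_self_eq_one_iff, ← pow_two, ← pow_mul, mul_comm, pow_mul, hε2, one_pow]
  have hent : ∀ i j, (g ^ p) i j = (scalar (Fin 2) (ε ^ p) : Matrix (Fin 2) (Fin 2) K) i j := by
    intro i j
    rw [← hpow]
    exact congrFun (congrFun (Matrix.SpecialLinearGroup.coe_pow g p) i) j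
  have : g ^ p = 1 ∨ g ^ p = -1 := by
    rcases hεp with h | h
    · left
      apply sl2_ext <;> rw [hent, h] <;> simp
    · right
      apply sl2_ext <;> rw [hent, h] <;> simp [neg_ij]
  rcases this with h | h
  · rw [h, one_smul]
  · rw [h, neg_one_smul_pt]

end Moebius

/-! ### Translations and elements of trace `±2` in a finite subgroup -/

section FiniteSubgroup

/-- If `g ^ p` acts trivially then an invariant finite set has as many elements, modulo `p`, as
it has fixed points of `g`. -/
lemma card_modEq_fixed {Γ P : Type*} [Group Γ] [MulAction Γ P] [DecidableEq P] (p : ℕ)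
    [Fact p.Prime] (S : Finset P) (g : Γ) (hS : ∀ a ∈ S, g • a ∈ S)
    (hg : ∀ a : P, g ^ p • a = a) :
    S.card ≡ (S.filter fun a => g • a = a).card [MOD p] := by
  let f : Function.End S := fun a => ⟨g • a.1, hS _ a.2⟩
  have hf : ∀ (n : ℕ) (a : S), ((f ^ n) a : P) = g ^ n • (a : P) := by
    intro n
    induction n with
    | zero => intro a; simp; rfl
    | succ n ih =>
      intro a
      have : (f ^ (n + 1)) a = (f ^ n) (f a) := by rw [pow_succ]; rfl
      rw [this, ih, pow_succ, mul_smul]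
  have hf1 : f ^ p ^ 1 = 1 := by
    funext a
    apply Subtype.ext
    rw [hf, pow_one, hg]; rfl
  have h := Equiv.Perm.card_fixedPoints_modEq hf1
  rw [Fintype.card_coe] at h
  have e : Fintype.card f.fixedPoints = (S.filter fun a => g • a = a).card := ?_
  · rwa [e] at h
  rw [← Fintype.card_coe]
  refine Fintype.card_congr ⟨fun a => ⟨a.1.1, Finset.mem_filter.2 ⟨a.1.2, ?_⟩⟩,
    fun a => ⟨⟨a.1, (Finset.mem_filter.1 a.2).1⟩, ?_⟩, fun a => rfl, fun a => rfl⟩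
  · exact congrArg Subtype.val a.2
  · exact Subtype.ext (Finset.mem_filter.1 a.2).2

variable {K : Type*} [Field K] (G : Subgroup (SpecialLinearGroup (Fin 2) K))

/-- The translations contained in a subgroup of `SL₂(K)`, as an additive subgroup of `K`. -/
def trn : AddSubgroup K where
  carrier := {a | uu a ∈ G}
  zero_mem' := by
    change uu 0 ∈ G
    rw [uu_zero]; exact G.one_mem
  add_mem' := by
    intro a b ha hb
    change uu (a + b) ∈ G
    rw [uu_add]; exact G.mul_mem ha hb
  neg_mem' := by
    intro a ha
    change uu (-a) ∈ G
    rw [uu_neg]; exact G.inv_mem ha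

lemma mem_trn {a : K} : a ∈ trn G ↔ uu a ∈ G := Iff.rfl

lemma smul_coe_def [DecidableEq K] (g : G) (z : OnePoint K) : g • z = (g : SpecialLinearGroup (Fin 2) K) • z := rfl

lemma finite_trn [Finite G] : Finite (trn G) :=
  Finite.of_injective (fun a : trn G => (⟨uu a.1, a.2⟩ : G)) fun a b h => by
    have := congrArg (fun g : G => (g : SpecialLinearGroup (Fin 2) K) 0 1) h
    exact Subtype.ext this

variable [DecidableEq K] (p : ℕ) [hp : Fact p.Prime] [CharP K p] (h2 : (2 : K) ≠ 0) [Fintype G]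

include hp h2 in
/-- A noncentral element of trace `±2` fixes a unique point, and that point lies in the orbit of
`∞` as soon as the group contains `uu 1`. -/
lemma one_fix_orb (h1G : uu (1 : K) ∈ G) (g : G) (h1 : g.1 ≠ 1) (hm : g.1 ≠ -1)
    (ht : (g.1 0 0 + g.1 1 1) ^ 2 = 4) :
    ∃ a ∈ orb G (OnePoint.infty : OnePoint K), ∀ b : OnePoint K, g • b = b ↔ b = a := by
  have key : ∀ g : G, (g.1 0 0 + g.1 1 1) ^ 2 = 4 → (orb G (OnePoint.infty : OnePoint K)).card ≡
      ((orb G (OnePoint.infty : OnePoint K)).filter fun a => g • a = a).card [MOD p] := by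
    intro g ht
    refine card_modEq_fixed p _ g (fun a ha => smul_mem_orb g ha) fun a => ?_
    exact pow_char_smul p h2 g.1 ht a
  have hu := key ⟨uu 1, h1G⟩ (by simp only [uu_00, uu_11]; norm_num)
  have hinf : ((orb G (OnePoint.infty : OnePoint K)).filter
      fun a => (⟨uu 1, h1G⟩ : G) • a = a) = {OnePoint.infty} := by
    ext a
    simp only [Finset.mem_filter, Finset.mem_singleton, smul_coe_def]
    constructor
    · rintro ⟨-, h⟩
      induction a using OnePoint.rec with
      | infty => rfl
      | coe z => rw [uu_smul, OnePoint.coe_eq_coe] at h; simp at h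
    · rintro rfl
      exact ⟨self_mem_orb _, by rw [fix_infty]; rfl⟩
  rw [hinf, Finset.card_singleton] at hu
  have hg := (key g ht).symm.trans hu
  obtain ⟨a, ha⟩ := one_fix h2 g.1 h1 hm ht
  have hne : ((orb G (OnePoint.infty : OnePoint K)).filter fun a => g • a = a).Nonempty := by
    rw [← Finset.card_pos, Nat.pos_iff_ne_zero]
    intro h
    rw [h] at hg
    exact hp.out.one_lt.ne' (Nat.dvd_one.1 ((Nat.modEq_zero_iff_dvd).1 hg.symm))
  obtain ⟨b, hb⟩ := hne
  rw [Finset.mem_filter] at hb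
  have hba : b = a := (ha b).1 hb.2
  exact ⟨a, hba ▸ hb.1, ha⟩

/-! ### The stabilizer of `∞` -/

lemma card_eq_mul_of_fibers {α β : Type*} [DecidableEq β] (s : Finset α) (f : α → β) (n : ℕ)
    (h : ∀ a ∈ s, (s.filter fun b => f b = f a).card = n) : s.card = (s.image f).card * n := by
  rw [Finset.card_eq_sum_card_image f s, ← smul_eq_mul, ← Finset.sum_const]
  refine Finset.sum_congr rfl fun b hb => ?_
  obtain ⟨a, ha, rfl⟩ := Finset.mem_image.1 hb
  exact h a ha

/-- A finite subset of `K` stable under translation by `U` is a union of cosets of `U`. -/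
lemma card_dvd_of_translate {K : Type*} [Field K] (U : AddSubgroup K) (S : Finset K)
    (h : ∀ z ∈ S, ∀ a ∈ U, z + a ∈ S) : Nat.card U ∣ S.card := by
  classical
  rw [card_eq_mul_of_fibers S (fun z => (z : K ⧸ U)) (Nat.card U)]
  · exact Dvd.intro_left _ rfl
  · intro z hz
    rw [← Nat.card_eq_finsetCard]
    symm
    refine Nat.card_congr ⟨fun a => ⟨z + a.1, ?_⟩, fun b => ⟨-z + b.1, ?_⟩, ?_, ?_⟩
    · exact Finset.mem_filter.2 ⟨h z hz a.1 a.2, by simp⟩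
    · exact QuotientAddGroup.eq.1 (Finset.mem_filter.1 b.2).2.symm
    · intro a; simp
    · intro b; simp

include h2 in
/-- The stabilizer of `∞` is an extension of the group of diagonal entries, of order `2 * t`, by the
translations; the squares of diagonal entries are nonzero elements of `trn G`, so `t < |trn G|`. -/
lemma card_stb_infty (h1G : uu (1 : K) ∈ G) (hm : -1 ∈ G) :
    ∃ t : ℕ, t + 1 ≤ Nat.card (trn G) ∧
      (stb G (OnePoint.infty : OnePoint K)).card = Nat.card (trn G) * (2 * t) := by
  have := finite_trn G
  have hB : ∀ g : G, g ∈ stb G (OnePoint.infty : OnePoint K) ↔ g.1 1 0 = 0 := fun g => by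
    rw [mem_stb, smul_coe_def, fix_infty]
  generalize stb G (OnePoint.infty : OnePoint K) = B at hB ⊢
  have hf1 : ∀ g ∈ B, (B.filter fun h : G => h.1 0 0 = g.1 0 0).card = Nat.card (trn G) := by
    intro g hg
    rw [← Nat.card_eq_finsetCard]
    symm
    rw [hB] at hg
    have hd := sl2_det g.1
    rw [hg, mul_zero, sub_zero] at hd
    refine Nat.card_congr ⟨fun a => ⟨g * ⟨uu a.1, a.2⟩, ?_⟩,
      fun h => ⟨(g⁻¹ * h : G).1 0 1, ?_⟩, ?_, ?_⟩
    · rw [Finset.mem_filter, hB]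
      simp only [Subgroup.coe_mul, mul_10, mul_00, uu_00, uu_10, hg]
      simp
    · have hh := (Finset.mem_filter.1 h.2)
      rw [hB] at hh
      have hhd := sl2_det h.1.1
      have : uu ((g⁻¹ * h : G).1 0 1) = (g⁻¹ * h : G).1 := by
        rw [hh.1, hh.2] at hhd
        apply sl2_ext <;> simp only [Subgroup.coe_mul, Subgroup.coe_inv, mul_10, mul_00, mul_01,
          mul_11, uu_00, uu_10, uu_01, uu_11, hg, hh.1, hh.2, inv_00, inv_01, inv_10, inv_11]
        · linear_combination -hd
        · ring
        · linear_combination -hhd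
      rw [mem_trn, this]
      exact (g⁻¹ * h : G).2
    · intro a
      apply Subtype.ext
      simp only [inv_mul_cancel_left, uu_01]
    · intro h
      have hh := (Finset.mem_filter.1 h.2)
      rw [hB] at hh
      have hhd := sl2_det h.1.1
      rw [hh.1, hh.2] at hhd
      apply Subtype.ext
      apply Subtype.ext
      apply sl2_ext <;> simp only [Subgroup.coe_mul, Subgroup.coe_inv, mul_10, mul_00, mul_01,
          mul_11, uu_00, uu_10, uu_01, uu_11, hg, hh.1, hh.2, inv_00, inv_01]
      · ring
      · linear_combination (h.1.1 0 1) * hd - (g.1 0 1) * hhd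
      · ring
      · have h0 : g.1 0 0 ≠ 0 := left_ne_zero_of_mul_eq_one hd
        apply mul_left_cancel₀ h0
        linear_combination hd - hhd
  have hc1 := card_eq_mul_of_fibers B (fun h : G => h.1 0 0) _ hf1
  obtain ⟨T, hT⟩ : ∃ T, T = B.image (fun h : G => h.1 0 0) := ⟨_, rfl⟩
  rw [← hT] at hc1
  have hT0 : ∀ s ∈ T, s ≠ 0 ∧ -s ∈ T ∧ s ^ 2 ∈ trn G := by
    intro s hs
    obtain ⟨g, hg, rfl⟩ := Finset.mem_image.1 (hT ▸ hs)
    rw [hB] at hg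
    have hd := sl2_det g.1
    rw [hg, mul_zero, sub_zero] at hd
    refine ⟨left_ne_zero_of_mul_eq_one hd, hT ▸ Finset.mem_image.2 ⟨⟨-1, hm⟩ * g, ?_, ?_⟩, ?_⟩
    · rw [hB]; simp [neg_ij, hg]
    · simp [neg_ij]
    · have : uu (g.1 0 0 ^ 2) = g.1 * uu 1 * g.1⁻¹ := by
        apply sl2_ext <;> simp only [mul_10, mul_00, mul_01,
          mul_11, uu_00, uu_10, uu_01, uu_11, hg, inv_00, inv_01, inv_10, inv_11]
        · linear_combination -hd
        · ring
        · ring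
        · linear_combination -hd
      rw [mem_trn, this]
      exact G.mul_mem (G.mul_mem g.2 h1G) (G.inv_mem g.2)
  have hc2 := card_eq_mul_of_fibers T (fun s => s ^ 2) 2 (by
    intro s hs
    obtain ⟨hs0, hsm, -⟩ := hT0 s hs
    rw [Finset.card_eq_two]
    refine ⟨s, -s, fun h => ?_, ?_⟩
    · apply mul_ne_zero h2 hs0
      linear_combination h
    · ext r
      simp only [Finset.mem_filter, Finset.mem_insert, Finset.mem_singleton, sq_eq_sq_iff_eq_or_eq_neg]
      constructor
      · exact fun h => h.2
      · rintro (rfl | rfl)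
        · exact ⟨hs, Or.inl rfl⟩
        · exact ⟨hsm, Or.inr rfl⟩)
  refine ⟨(T.image fun s => s ^ 2).card, ?_, by rw [hc1, hc2]; ring⟩
  have h0 : (0 : K) ∉ T.image fun s => s ^ 2 := by
    intro h
    obtain ⟨s, hs, hs2⟩ := Finset.mem_image.1 h
    exact (hT0 s hs).1 (pow_eq_zero_iff two_ne_zero |>.1 hs2)
  rw [← Finset.card_insert_of_notMem h0, ← Nat.card_eq_finsetCard]
  refine Nat.card_le_card_of_injective (fun a => (⟨a.1, ?_⟩ : trn G)) ?_
  · rcases Finset.mem_insert.1 a.2 with h | h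
    · rw [h]; exact zero_mem _
    · obtain ⟨s, hs, hs2⟩ := Finset.mem_image.1 h
      rw [← hs2]
      exact (hT0 s hs).2.2
  · intro a b h
    exact Subtype.ext (congrArg (fun x : trn G => x.1) h)

/-- The noncentral elements of trace `±2`, that is, the elements `± g` with `g ≠ 1` unipotent. -/
def paraG : Finset G :=
  Finset.univ.filter fun g => g.1 ≠ 1 ∧ g.1 ≠ -1 ∧ (g.1 0 0 + g.1 1 1) ^ 2 = 4

include h2 in
lemma card_para_infty (hm : -1 ∈ G) :
    ((paraG G).filter fun g => g • (OnePoint.infty : OnePoint K) = OnePoint.infty).card =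
      2 * (Nat.card (trn G) - 1) := by
  have := finite_trn G
  have : Fintype (trn G) := Fintype.ofFinite _
  have key : ((paraG G).filter fun g => g • (OnePoint.infty : OnePoint K) = OnePoint.infty) =
      (Finset.univ.erase (0 : trn G)).image (fun a => (⟨uu a.1, a.2⟩ : G)) ∪
      (Finset.univ.erase (0 : trn G)).image (fun a => (⟨-1, hm⟩ * ⟨uu a.1, a.2⟩ : G)) := by
    ext g
    have hd := sl2_det g.1
    simp only [Finset.mem_filter, Finset.mem_union, Finset.mem_image, Finset.mem_erase, paraG,
      Finset.mem_univ, and_true, true_and, smul_coe_def, fix_infty]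
    constructor
    · rintro ⟨⟨h1, hm1, ht⟩, hg⟩
      rw [hg, mul_zero, sub_zero] at hd
      have hda : g.1 0 0 = g.1 1 1 := by
        have : (g.1 0 0 - g.1 1 1) ^ 2 = 0 := by linear_combination ht - 4 * hd
        exact sub_eq_zero.1 (pow_eq_zero_iff (two_ne_zero) |>.1 this)
      have : g.1 0 0 = 1 ∨ g.1 0 0 = -1 := by
        rw [← mul_self_eq_one_iff]
        rw [← hda] at hd
        exact hd
      rcases this with h | h
      · left
        have hgu : uu (g.1 0 1) = g.1 := by
          apply sl2_ext <;> simp [hg, h, ← hda]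
        refine ⟨⟨g.1 0 1, by rw [mem_trn, hgu]; exact g.2⟩, ?_, Subtype.ext hgu⟩
        intro h0
        apply h1
        rw [← hgu, show g.1 0 1 = 0 from congrArg Subtype.val h0, uu_zero]
      · right
        have hgu : uu (-g.1 0 1) = -1 * g.1 := by
          apply sl2_ext <;> simp [hg, h, ← hda, neg_ij]
        refine ⟨⟨-g.1 0 1, by rw [mem_trn, hgu]; exact G.mul_mem hm g.2⟩, ?_, Subtype.ext ?_⟩
        · intro h0
          apply hm1
          rw [show -g.1 0 1 = 0 from congrArg Subtype.val h0, uu_zero] at hgu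
          rw [hgu]; simp
        · simp only [Subgroup.coe_mul, hgu]; simp
    · rintro (⟨a, ha, rfl⟩ | ⟨a, ha, rfl⟩)
      · refine ⟨⟨fun h => ?_, fun h => ?_, ?_⟩, rfl⟩
        · exact ha (Subtype.ext (congrArg (fun g : SpecialLinearGroup (Fin 2) K => g 0 1) h))
        · have := congrArg (fun g : SpecialLinearGroup (Fin 2) K => g 0 0) h
          simp only [uu_00, neg_ij, one_00] at this
          apply h2
          linear_combination this
        · simp only [uu_00, uu_11]; norm_num
      · refine ⟨⟨fun h => ?_, fun h => ?_, ?_⟩, ?_⟩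
        · have := congrArg (fun g : SpecialLinearGroup (Fin 2) K => g 0 0) h
          simp [neg_ij] at this
          apply h2
          linear_combination -this
        · refine ha (Subtype.ext ?_)
          have := congrArg (fun g : SpecialLinearGroup (Fin 2) K => g 0 1) h
          simpa [neg_ij] using this
        · simp [neg_ij]; norm_num
        · simp [neg_ij]
  rw [key, Finset.card_union_of_disjoint, Finset.card_image_of_injective,
    Finset.card_image_of_injective, Finset.card_erase_of_mem (Finset.mem_univ _), Finset.card_univ,
    Nat.card_eq_fintype_card]
  · ring
  · intro a b h
    have := congrArg (fun g : G => g.1 0 1) h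
    apply Subtype.ext
    simpa [neg_ij] using this
  · intro a b h
    have := congrArg (fun g : G => g.1 0 1) h
    exact Subtype.ext this
  · rw [Finset.disjoint_left]
    intro g hg hg'
    obtain ⟨a, -, rfl⟩ := Finset.mem_image.1 hg
    obtain ⟨b, -, hb⟩ := Finset.mem_image.1 hg'
    have := congrArg (fun g : G => g.1 0 0) hb
    simp [neg_ij] at this
    apply h2
    linear_combination -this

/-! ### The two orbits -/

/-- The numerical consequence of the orbit count: here `q` is the number of translations, `1 + m * q`
the size of the orbit of `∞`, and `2 * t * q`, `2 * e` are the orders of the two stabilizers. -/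
lemma arith (q m t e : ℕ) (hq : 3 ≤ q) (hm : 1 ≤ m) (ht : t + 1 ≤ q)
    (h : (2 + (1 + m * q) * (q - 2)) * (2 * e) = (1 + m * q) * (q * (2 * t))) (ht0 : 0 < t) :
    m = 1 ∨ (q = 3 ∧ m = 3 ∧ t = 2 ∧ e = 5) := by
  obtain ⟨r, rfl⟩ : ∃ r, q = r + 2 := ⟨q - 2, by omega⟩
  rw [Nat.add_sub_cancel] at h
  -- `e * (1 + m * (q - 2)) = t * (1 + m * q)`
  have h1 : e * (1 + m * r) = t * (1 + m * (r + 2)) := by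
    have : 2 * (r + 2) * (e * (1 + m * r)) = 2 * (r + 2) * (t * (1 + m * (r + 2))) := by
      linear_combination h
    exact Nat.eq_of_mul_eq_mul_left (by positivity) this
  -- the two factors `1 + m * (q - 2)` and `1 + m * q` differ by `2 * m`
  have hdvd : (1 + m * r) ∣ 2 * t := by
    have h2 : (1 + m * r) ∣ m * (2 * t) := by
      have h3 : (1 + m * r) ∣ t * (1 + m * r) + m * (2 * t) := by
        refine ⟨e, ?_⟩
        linear_combination -h1
      exact (Nat.dvd_add_right (Dvd.intro_left _ rfl)).1 h3
    refine Nat.Coprime.dvd_of_dvd_mul_left ?_ h2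
    rw [Nat.coprime_add_mul_left_left]
    exact Nat.coprime_one_left m
  obtain ⟨k, hk⟩ := hdvd
  have hk0 : 1 ≤ k := by
    rcases Nat.eq_zero_or_pos k with rfl | h
    · omega
    · exact h
  rcases Nat.lt_or_ge m 3 with hm3 | hm3
  · interval_cases m
    · exact Or.inl rfl
    · exfalso
      rcases Nat.lt_or_ge k 2 with hk2 | hk2
      · interval_cases k
        omega
      · nlinarith
  · right
    have hr : r = 1 := by
      by_contra hr
      have : 2 ≤ r := by omega
      nlinarith [Nat.mul_le_mul hm3 this, Nat.mul_le_mul_right r hm3]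
    subst hr
    have ht2 : t ≤ 2 := by omega
    have hm4 : m = 3 := by nlinarith
    subst hm4
    have : t = 2 := by omega
    subst this
    omega

variable [IsAlgClosed K]

include hp h2 in
/-- Counting the pairs formed by a noncentral element and one of its fixed points shows that besides
the orbit of `∞` there is exactly one further orbit of points with noncentral stabilizer. -/
lemma orbit_structure (h1G : uu (1 : K) ∈ G) (hm : -1 ∈ G) (l : K) (hl : l ≠ 0) (hlG : vv l ∈ G) :
    (OnePoint.some (0 : K)) ∈ orb G (OnePoint.infty : OnePoint K) ∧ 3 ≤ Nat.card (trn G) ∧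
    ∃ m t e : ℕ, ∃ b : OnePoint K,
      1 ≤ m ∧ t + 1 ≤ Nat.card (trn G) ∧ 0 < t ∧
      (orb G (OnePoint.infty : OnePoint K)).card = 1 + m * Nat.card (trn G) ∧
      (stb G (OnePoint.infty : OnePoint K)).card = Nat.card (trn G) * (2 * t) ∧
      (stb G b).card = 2 * e ∧
      (orb G b).card = 2 + (1 + m * Nat.card (trn G)) * (Nat.card (trn G) - 2) ∧
      ∀ g : G, g.1 ≠ 1 → g.1 ≠ -1 → ∀ a : OnePoint K, g • a = a →
        a ∈ orb G (OnePoint.infty : OnePoint K) ∨ a ∈ orb G b := by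
  have := finite_trn G
  have hzero : (OnePoint.some (0 : K)) ∈ orb G (OnePoint.infty : OnePoint K) := by
    obtain ⟨a, ha, hfix⟩ := one_fix_orb G p h2 h1G ⟨vv l, hlG⟩
      (fun h => hl (congrArg (fun g : SpecialLinearGroup (Fin 2) K => g 1 0) h))
      (fun h => hl (by
        have := congrArg (fun g : SpecialLinearGroup (Fin 2) K => g 1 0) h
        simpa [neg_ij] using this))
      (by simp only [vv_00, vv_11]; norm_num)
    have : (⟨vv l, hlG⟩ : G) • (OnePoint.some (0 : K)) = OnePoint.some 0 := by
      rw [smul_coe_def]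
      exact (fix_some _ _).2 (by simp)
    rwa [(hfix _).1 this]
  have hq3 : 3 ≤ Nat.card (trn G) := by
    have h1 : (1 : K) ∈ trn G := h1G
    have h3 : ({0, 1, -1} : Finset K).card = 3 := by
      rw [Finset.card_eq_three]
      refine ⟨0, 1, -1, zero_ne_one, ?_, ?_, rfl⟩
      · simp
      · intro h
        apply h2
        linear_combination h
    rw [← h3, ← Nat.card_eq_finsetCard]
    refine Nat.card_le_card_of_injective (fun a => (⟨a.1, ?_⟩ : trn G)) ?_
    · have := a.2
      simp only [Finset.mem_insert, Finset.mem_singleton] at this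
      rcases this with h | h | h <;> rw [h]
      · exact zero_mem _
      · exact h1
      · exact neg_mem h1
    · intro a b h
      exact Subtype.ext (congrArg (fun x : trn G => x.1) h)
  obtain ⟨t, ht, hst⟩ := card_stb_infty G h2 h1G hm
  have ht0 : 0 < t := by
    rcases Nat.eq_zero_or_pos t with rfl | h
    · have : 0 < (stb G (OnePoint.infty : OnePoint K)).card :=
        Finset.card_pos.2 ⟨1, mem_stb.2 (one_smul _ _)⟩
      omega
    · exact h
  -- translations act freely on the finite part of the orbit of `∞`
  obtain ⟨m, hm1, hmN⟩ : ∃ m, 1 ≤ m ∧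
      (orb G (OnePoint.infty : OnePoint K)).card = 1 + m * Nat.card (trn G) := by
    set S : Finset K := (orb G (OnePoint.infty : OnePoint K)).preimage OnePoint.some
      (OnePoint.coe_injective.injOn) with hS
    have hSmem : ∀ z : K, z ∈ S ↔ OnePoint.some z ∈ orb G (OnePoint.infty : OnePoint K) := by
      intro z; rw [hS, Finset.mem_preimage]
    obtain ⟨m, hm⟩ := card_dvd_of_translate (trn G) S (by
      intro z hz a ha
      rw [hSmem] at hz ⊢
      rw [← uu_smul]
      exact smul_mem_orb (⟨uu a, ha⟩ : G) hz)
    have hins : orb G (OnePoint.infty : OnePoint K) =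
        insert OnePoint.infty (S.image OnePoint.some) := by
      ext a
      induction a using OnePoint.rec with
      | infty => simp [self_mem_orb]
      | coe z =>
        rw [Finset.mem_insert, or_iff_right (OnePoint.coe_ne_infty z), Finset.mem_image]
        constructor
        · intro h
          exact ⟨z, (hSmem z).2 h, rfl⟩
        · rintro ⟨z', hz', hzz⟩
          rw [← hzz]
          exact (hSmem z').1 hz'
    have hScard : S.card ≠ 0 := by
      intro h
      rw [Finset.card_eq_zero] at h
      have := (hSmem 0).2 hzero
      rw [h] at this
      simp at this
    refine ⟨m, ?_, ?_⟩
    · rcases Nat.eq_zero_or_pos m with rfl | h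
      · exact (hScard (by rw [hm, mul_zero])).elim
      · exact h
    · rw [hins, Finset.card_insert_of_notMem (by simp),
        Finset.card_image_of_injective _ OnePoint.coe_injective, hm]
      ring
  have hne1 : (⟨-1, hm⟩ : G) ≠ 1 := by
    intro h
    have := congrArg (fun g : G => g.1 0 0) h
    simp [neg_ij] at this
    apply h2
    linear_combination -this
  have hmm : (⟨-1, hm⟩ : G) * ⟨-1, hm⟩ = 1 := Subtype.ext (by simp)
  obtain ⟨b, hb1, hb2, hb3⟩ := orbit_count (Γ := G) (P := OnePoint K) ⟨-1, hm⟩ hne1 hmm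
    (fun g => Subtype.ext (by simp)) (fun a => neg_one_smul_pt a) (paraG G)
    (by simp [paraG]) (by simp [paraG])
    (by
      intro g h hh
      simp only [paraG, Finset.mem_filter, Finset.mem_univ, true_and] at hh ⊢
      refine ⟨fun h' => hh.1 ?_, fun h' => hh.2.1 ?_, ?_⟩
      · exact conj_eq_one_iff.1 h'
      · have h'' : g.1 * h.1 * g.1⁻¹ = -1 := h'
        rw [mul_inv_eq_iff_eq_mul] at h''
        have : g.1 * h.1 = g.1 * (-1) := by rw [h'']; simp
        exact mul_left_cancel this
      · have hd := sl2_det g.1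
        rw [← hh.2.2]
        congr 1
        simp only [Subgroup.coe_mul, Subgroup.coe_inv, mul_00, mul_01, mul_10, mul_11, inv_00,
          inv_01, inv_10, inv_11]
        linear_combination (h.1 0 0 + h.1 1 1) * hd)
    OnePoint.infty
    (by
      intro g hg
      simp only [paraG, Finset.mem_filter, Finset.mem_univ, true_and] at hg
      exact one_fix_orb G p h2 h1G g hg.1 hg.2.1 hg.2.2)
    (by
      intro g h1 hgm hE
      refine two_fix h2 g.1 fun ht => hE ?_
      simp only [paraG, Finset.mem_filter, Finset.mem_univ, true_and]
      exact ⟨fun h => h1 (Subtype.ext h), fun h => hgm (Subtype.ext h), ht⟩)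
    _ (card_para_infty G h2 hm) (by omega)
    (by
      rw [hst]
      have := Nat.mul_le_mul_left (Nat.card (trn G)) (show 2 * 1 ≤ 2 * t by omega)
      omega)
    (by rw [hmN]; nlinarith)
  -- the second stabilizer contains `-1`, hence has even order
  have heven : ∃ e, (stb G b).card = 2 * e := by
    have h2o : orderOf (⟨-1, hm⟩ : G) = 2 :=
      orderOf_eq_prime (by rw [pow_two, hmm]) hne1
    have h := Subgroup.orderOf_dvd_natCard (MulAction.stabilizer G b)
      (x := (⟨-1, hm⟩ : G)) (neg_one_smul_pt b)
    rw [h2o] at h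
    obtain ⟨e, he⟩ := h
    refine ⟨e, ?_⟩
    rw [← he, ← Nat.card_eq_finsetCard]
    exact Nat.card_congr (Equiv.subtypeEquivRight fun g => by simp [mem_stb])
  obtain ⟨e, he⟩ := heven
  refine ⟨hzero, hq3, m, t, e, b, hm1, ht, ht0, hmN, hst, he, ?_, ?_⟩
  · rw [hmN] at hb2
    obtain ⟨r, hr⟩ : ∃ r, Nat.card (trn G) = r + 2 := ⟨Nat.card (trn G) - 2, by omega⟩
    rw [hr] at hb2 ⊢
    have : 2 * (r + 2 - 1) - 2 = 2 * r := by omega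
    rw [this] at hb2
    rw [Nat.add_sub_cancel]
    apply Nat.eq_of_mul_eq_mul_left two_pos
    rw [hb2]; ring
  · intro g h1 hgm a ha
    exact hb3 g (fun h => h1 (congrArg Subtype.val h)) (fun h => hgm (congrArg Subtype.val h)) a ha

end FiniteSubgroup

/-! ### Subfields from small orbits, and the exceptional parameters -/

section Subfields

variable {K : Type*} [Field K]

/-- A finite additive group containing `1` and stable under `a ↦ κ / a` is stable under products;
this rests on Hua's identity for `a * b * a`. -/
lemma hua_mul (U : AddSubgroup K) [Finite U] (h2 : (2 : K) ≠ 0) (κ : K) (hκ : κ ≠ 0)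
    (h1 : (1 : K) ∈ U) (hj : ∀ a ∈ U, a ≠ 0 → κ / a ∈ U) :
    (∀ a ∈ U, ∀ b ∈ U, a * b ∈ U) ∧ ∀ a ∈ U, a⁻¹ ∈ U := by
  -- an injective scaling of the finite set `U` is onto
  have hscale : ∀ c : K, c ≠ 0 → (∀ a ∈ U, c * a ∈ U) → ∀ a, c * a ∈ U → a ∈ U := by
    intro c hc hcU a ha
    have hinj : Function.Injective (fun a : U => (⟨c * a.1, hcU _ a.2⟩ : U)) := by
      intro x y hxy
      exact Subtype.ext (mul_left_cancel₀ hc (congrArg Subtype.val hxy))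
    obtain ⟨y, hy⟩ := (Finite.injective_iff_surjective.1 hinj) ⟨c * a, ha⟩
    have := mul_left_cancel₀ hc (congrArg Subtype.val hy)
    rw [← this]; exact y.2
  have hP : ∀ a ∈ U, ∀ b ∈ U, a ^ 2 * b / κ ∈ U := by
    intro a ha b hb
    rcases eq_or_ne a 0 with rfl | ha0
    · simp [U.zero_mem]
    rcases eq_or_ne b 0 with rfl | hb0
    · simp [U.zero_mem]
    by_cases hab : κ - a * b = 0
    · have : a ^ 2 * b / κ = a := by
        field_simp
        linear_combination -hab
      rwa [this]
    · have e1 : κ / b - a ∈ U := U.sub_mem (hj b hb hb0) ha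
      have e1' : κ / b - a = (κ - a * b) / b := by field_simp
      rw [e1'] at e1
      have e2 := U.add_mem (hj a ha ha0) (hj _ e1 (div_ne_zero hab hb0))
      have e2' : κ / a + κ / ((κ - a * b) / b) = κ ^ 2 / (a * (κ - a * b)) := by
        field_simp
        ring
      rw [e2'] at e2
      have e3 := U.sub_mem ha (hj _ e2
        (div_ne_zero (pow_ne_zero 2 hκ) (mul_ne_zero ha0 hab)))
      have e3' : a - κ / (κ ^ 2 / (a * (κ - a * b))) = a ^ 2 * b / κ := by
        field_simp
        ring
      rwa [e3'] at e3
  have hk : ∀ b ∈ U, κ⁻¹ * b ∈ U := by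
    intro b hb
    have := hP 1 h1 b hb
    rwa [one_pow, one_mul, div_eq_inv_mul] at this
  have hsq : ∀ a ∈ U, ∀ b ∈ U, a ^ 2 * b ∈ U := by
    intro a ha b hb
    refine hscale κ⁻¹ (inv_ne_zero hκ) hk _ ?_
    rw [← div_eq_inv_mul]; exact hP a ha b hb
  have hmul : ∀ a ∈ U, ∀ b ∈ U, a * b ∈ U := by
    intro a ha b hb
    refine hscale 2 h2 (fun x hx => ?_) _ ?_
    · rw [two_mul]; exact U.add_mem hx hx
    · have := U.sub_mem (U.sub_mem (hsq _ (U.add_mem ha hb) 1 h1) (hsq a ha 1 h1)) (hsq b hb 1 h1)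
      convert this using 1
      ring
  refine ⟨hmul, fun a ha => ?_⟩
  rcases eq_or_ne a 0 with rfl | ha0
  · simp [U.zero_mem]
  have := hk _ (hj a ha ha0)
  rwa [div_eq_mul_inv, ← mul_assoc, inv_mul_cancel₀ hκ, one_mul] at this

end Subfields

section FiniteSubgroup

variable {K : Type*} [Field K] (G : Subgroup (SpecialLinearGroup (Fin 2) K))
variable [DecidableEq K] (p : ℕ) [hp : Fact p.Prime] [CharP K p] (h2 : (2 : K) ≠ 0) [Fintype G]

/-- If the orbit of `∞` is as small as possible, its finite part is the group of translations. -/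
lemma mem_orb_iff_mem_trn (h0 : (OnePoint.some (0 : K)) ∈ orb G (OnePoint.infty : OnePoint K))
    (hc : (orb G (OnePoint.infty : OnePoint K)).card = 1 + Nat.card (trn G)) (z : K) :
    OnePoint.some z ∈ orb G (OnePoint.infty : OnePoint K) ↔ z ∈ trn G := by
  have := finite_trn G
  have hfin : (trn G : Set K).Finite := Set.toFinite _
  set T : Finset (OnePoint K) := insert OnePoint.infty (hfin.toFinset.image OnePoint.some) with hT
  have hsub : T ⊆ orb G (OnePoint.infty : OnePoint K) := by
    intro a ha
    rw [hT, Finset.mem_insert, Finset.mem_image] at ha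
    rcases ha with rfl | ⟨z, hz, rfl⟩
    · exact self_mem_orb _
    · have hz' : z ∈ trn G := by simpa using hz
      have := smul_mem_orb (⟨uu z, hz'⟩ : G) h0
      rw [smul_coe_def] at this
      change uu z • ((0 : K) : OnePoint K) ∈ _ at this
      rw [uu_smul, zero_add] at this
      exact this
  have hcard : T.card = 1 + Nat.card (trn G) := by
    rw [hT, Finset.card_insert_of_notMem (by simp),
      Finset.card_image_of_injective _ OnePoint.coe_injective, add_comm]
    congr 1
    exact (Nat.card_eq_card_finite_toFinset hfin).symm
  have heq := Finset.eq_of_subset_of_card_le hsub (by rw [hc, hcard])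
  rw [← heq, hT, Finset.mem_insert, or_iff_right (OnePoint.coe_ne_infty z), Finset.mem_image]
  constructor
  · rintro ⟨y, hy, hyz⟩
    rw [← OnePoint.coe_injective hyz]
    simpa using hy
  · intro hz
    exact ⟨z, by simpa using hz, rfl⟩

include h2 in
/-- If the orbit of `∞` is as small as possible, the translations form a subfield. -/
lemma subfield_of_small_orbit (h1G : uu (1 : K) ∈ G)
    (h0 : (OnePoint.some (0 : K)) ∈ orb G (OnePoint.infty : OnePoint K))
    (hc : (orb G (OnePoint.infty : OnePoint K)).card = 1 + Nat.card (trn G))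
    (l : K) (hlG : vv l ∈ G) :
    ∃ L : Subfield K, l ∈ L ∧ ∀ a ∈ L, uu a ∈ G := by
  have := finite_trn G
  have hiff := mem_orb_iff_mem_trn G h0 hc
  have h1 : (1 : K) ∈ trn G := h1G
  -- an element of `G` exchanging `0` and `∞`
  obtain ⟨w, hwG, hw0, hw1⟩ : ∃ w ∈ G, w 0 0 = 0 ∧ w 1 1 = 0 := by
    obtain ⟨g, hg⟩ := mem_orb.1 h0
    rw [smul_coe_def, sl_smul_infty] at hg
    split_ifs at hg with h
    · exact (OnePoint.infty_ne_coe _ hg).elim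
    have hg0 : g.1 0 0 = 0 := by
      have := OnePoint.coe_injective hg
      exact (div_eq_zero_iff.1 this).resolve_right h
    -- `g⁻¹` sends `∞` to a finite point, which is moved to `0` by a translation
    have hmem : (g⁻¹) • (OnePoint.infty : OnePoint K) ∈ orb G (OnePoint.infty : OnePoint K) :=
      mem_orb.2 ⟨_, rfl⟩
    rw [smul_coe_def, sl_smul_infty, if_neg (by simpa [inv_10] using h)] at hmem
    have ha := (hiff _).1 hmem
    simp only [Subgroup.coe_inv, inv_00, inv_10] at ha
    have hd := sl2_det g.1
    refine ⟨uu (-(g.1 1 1 / -g.1 1 0)) * g.1⁻¹, G.mul_mem ?_ (G.inv_mem g.2), ?_, ?_⟩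
    · exact (trn G).neg_mem ha
    · simp only [mul_00, uu_00, uu_01, inv_00, inv_10]
      field_simp
      ring
    · simp only [mul_11, uu_10, uu_11, inv_01, inv_11, hg0]
      ring
  have hd := sl2_det w
  rw [hw0, hw1] at hd
  have hw01 : w 0 1 ≠ 0 := by rintro h; rw [h] at hd; simp at hd
  have hw10 : w 1 0 ≠ 0 := by rintro h; rw [h] at hd; simp at hd
  obtain ⟨hmul, hinv⟩ := hua_mul (trn G) h2 (w 0 1 / w 1 0) (div_ne_zero hw01 hw10) h1 (by
    intro a ha ha0
    have := smul_mem_orb (⟨w, hwG⟩ : G) ((hiff a).2 ha)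
    rw [smul_coe_def] at this
    change w • ((a : K) : OnePoint K) ∈ _ at this
    rw [sl_smul_some, hw0, hw1, if_neg (by simp [hw10, ha0])] at this
    have := (hiff _).1 this
    convert this using 1
    field_simp
    ring)
  refine ⟨⟨⟨⟨⟨⟨trn G, fun {a b} ha hb => hmul a ha b hb⟩, h1⟩,
    fun {a b} ha hb => (trn G).add_mem ha hb, (trn G).zero_mem⟩,
    fun {a} ha => (trn G).neg_mem ha⟩, fun a ha => hinv a ha⟩, ?_, fun a ha => ha⟩
  change l ∈ trn G
  by_cases hl1 : l + 1 = 0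
  · have : l = -1 := by linear_combination hl1
    rw [this]; exact (trn G).neg_mem h1
  · have := smul_mem_orb (⟨vv l, hlG⟩ : G) ((hiff 1).2 h1)
    rw [smul_coe_def] at this
    change vv l • ((1 : K) : OnePoint K) ∈ _ at this
    rw [sl_smul_some] at this
    simp only [vv_00, vv_01, vv_10, vv_11, mul_one] at this
    rw [if_neg hl1] at this
    have h3 := hinv _ ((hiff _).1 this)
    have h4 := (trn G).sub_mem h3 h1
    convert h4 using 1
    simp

variable [IsAlgClosed K]

omit [Fintype G] [IsAlgClosed K] [DecidableEq K] in
/-- In characteristic three, an eigenvalue of order dividing `12` or `10` leads to the listed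
traces. -/
lemma trace_list (h3 : (3 : K) = 0) (z c : K) (hz : z ^ 2 - c * z + 1 = 0)
    (h : z ^ 12 = 1 ∨ z ^ 10 = 1) :
    c = 0 ∨ c ^ 2 = 1 ∨ (c ^ 2 + c - 1) * (c ^ 2 - c - 1) = 0 := by
  have hz0 : z ≠ 0 := by
    rintro rfl
    simp at hz
  have hc : c = z + z⁻¹ := by
    field_simp
    linear_combination -hz
  rcases h with h | h
  · have h4 : (z ^ 4 - 1) ^ 3 = 0 := by
      linear_combination h + (-z ^ 8 + z ^ 4) * h3
    have h4' : (z - 1) * (z + 1) * (z ^ 2 + 1) = 0 := by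
      have := pow_eq_zero_iff (n := 3) (by norm_num) |>.1 h4
      linear_combination this
    rcases mul_eq_zero.1 h4' with h5 | h5
    · right; left
      rcases mul_eq_zero.1 h5 with h6 | h6
      · have : z = 1 := by linear_combination h6
        rw [hc, this]
        norm_num
        linear_combination h3
      · have : z = -1 := by linear_combination h6
        rw [hc, this]
        norm_num
        linear_combination h3
    · left
      have : c * z = 0 := by linear_combination h5 - hz
      exact (mul_eq_zero.1 this).resolve_right hz0
  · have hf : (z - 1) * (z + 1) * ((z ^ 4 + z ^ 3 + z ^ 2 + z + 1) *
        (z ^ 4 - z ^ 3 + z ^ 2 - z + 1)) = 0 := by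
      linear_combination h
    rcases mul_eq_zero.1 hf with h5 | h5
    · right; left
      rcases mul_eq_zero.1 h5 with h6 | h6
      · have : z = 1 := by linear_combination h6
        rw [hc, this]
        norm_num
        linear_combination h3
      · have : z = -1 := by linear_combination h6
        rw [hc, this]
        norm_num
        linear_combination h3
    · right; right
      have e1 : c * z = z ^ 2 + 1 := by linear_combination -hz
      have e2 : ((c ^ 2 + c - 1) * z ^ 2) * ((c ^ 2 - c - 1) * z ^ 2) = 0 := by
        have a1 : (c ^ 2 + c - 1) * z ^ 2 = z ^ 4 + z ^ 3 + z ^ 2 + z + 1 := by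
          linear_combination (c * z + z ^ 2 + 1 + z) * e1
        have a2 : (c ^ 2 - c - 1) * z ^ 2 = z ^ 4 - z ^ 3 + z ^ 2 - z + 1 := by
          linear_combination (c * z + z ^ 2 + 1 - z) * e1
        rw [a1, a2, h5]
      have e3 : ((c ^ 2 + c - 1) * (c ^ 2 - c - 1)) * z ^ 4 = 0 := by linear_combination e2
      exact (mul_eq_zero.1 e3).resolve_right (pow_ne_zero 4 hz0)

omit [Fintype G] [IsAlgClosed K] [DecidableEq K] in
/-- The two words `uu (±1) * vv l` have traces `2 ± l`; in characteristic three both can only be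
traces of elements of order dividing `12` or `10` if `l ^ 2 = 1` or `l ^ 2 = -1`. -/
lemma l_list (h3 : (3 : K) = 0) (l : K)
    (ha : l + 2 = 0 ∨ (l + 2) ^ 2 = 1 ∨
      ((l + 2) ^ 2 + (l + 2) - 1) * ((l + 2) ^ 2 - (l + 2) - 1) = 0)
    (hb : 2 - l = 0 ∨ (2 - l) ^ 2 = 1 ∨
      ((2 - l) ^ 2 + (2 - l) - 1) * ((2 - l) ^ 2 - (2 - l) - 1) = 0) :
    l = 0 ∨ l = 1 ∨ l = -1 ∨ l ^ 2 = -1 := by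
  have key : ∀ c : K, c = 0 ∨ c ^ 2 = 1 ∨ (c ^ 2 + c - 1) * (c ^ 2 - c - 1) = 0 →
      c = 0 ∨ c = 1 ∨ c = -1 ∨ c ^ 4 = -1 := by
    intro c h
    rcases h with h | h | h
    · exact Or.inl h
    · rcases mul_eq_zero.1 (show (c - 1) * (c + 1) = 0 by linear_combination h) with h | h
      · exact Or.inr (Or.inl (by linear_combination h))
      · exact Or.inr (Or.inr (Or.inl (by linear_combination h)))
    · exact Or.inr (Or.inr (Or.inr (by linear_combination h + c ^ 2 * h3)))
  rcases key _ ha with h | h | h | h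
  · right; left; linear_combination h - h3
  · right; right; left; linear_combination h
  · left; linear_combination h - h3
  · rcases key _ hb with h' | h' | h' | h'
    · right; right; left; linear_combination -h' + h3
    · right; left; linear_combination -h'
    · left; linear_combination -h' + h3
    · have : l * (l ^ 2 + 1) = 0 := by
        linear_combination h - h' - (5 * l ^ 3 + 21 * l) * h3
      rcases mul_eq_zero.1 this with h0 | h0
      · exact Or.inl h0
      · right; right; right; linear_combination h0

omit [Fintype G] [DecidableEq K] [IsAlgClosed K] in
/-- A matrix of `SL₂` with `g ^ n = 1` has only `n`-th roots of unity as eigenvalues. -/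
lemma eigen_pow (g : SpecialLinearGroup (Fin 2) K) (z : K)
    (hz : z ^ 2 - (g 0 0 + g 1 1) * z + 1 = 0) (n : ℕ) (hn : g ^ n = 1) : z ^ n = 1 := by
  have hdet : (g.1 - z • (1 : Matrix (Fin 2) (Fin 2) K)).det = 0 := by
    rw [Matrix.det_fin_two]
    have := sl2_det g
    simp only [Matrix.sub_apply, Matrix.smul_apply, smul_eq_mul]
    simp
    linear_combination hz + this
  obtain ⟨v, hv, hgv⟩ := Matrix.exists_mulVec_eq_zero_iff.2 hdet
  have hgv' : g.1 *ᵥ v = z • v := by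
    rw [Matrix.sub_mulVec, Matrix.smul_mulVec, Matrix.one_mulVec, sub_eq_zero] at hgv
    exact hgv
  have hpow : ∀ k : ℕ, (g.1 ^ k) *ᵥ v = z ^ k • v := by
    intro k
    induction k with
    | zero => simp
    | succ k ih => rw [pow_succ, ← Matrix.mulVec_mulVec, hgv', Matrix.mulVec_smul, ih, smul_smul,
        pow_succ, mul_comm]
  have h1 := hpow n
  have : g.1 ^ n = 1 := by
    have := congrArg Subtype.val hn
    rwa [Matrix.SpecialLinearGroup.coe_pow] at this
  rw [this, Matrix.one_mulVec] at h1
  obtain ⟨i, hi⟩ := Function.ne_iff.1 hv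
  have h2 := congrFun h1 i
  simp only [Pi.smul_apply, smul_eq_mul] at h2
  have h3 : (1 - z ^ n) * v i = 0 := by linear_combination h2
  have := (mul_eq_zero.1 h3).resolve_right hi
  linear_combination -this

omit [IsAlgClosed K] in
lemma pow_card_stb (a : OnePoint K) (g : G) (hg : g • a = a) (b : OnePoint K) (hab : a ∈ orb G b) :
    g ^ (stb G b).card = 1 := by
  obtain ⟨h, rfl⟩ := mem_orb.1 hab
  rw [← card_stb_smul b h]
  have hcard : (stb G (h • b)).card = Nat.card (MulAction.stabilizer G (h • b)) := by
    rw [← Nat.card_eq_finsetCard]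
    exact Nat.card_congr (Equiv.subtypeEquivRight fun g => by simp [mem_stb])
  rw [hcard]
  have := pow_card_eq_one' (x := (⟨g, hg⟩ : MulAction.stabilizer G (h • b)))
  exact congrArg Subtype.val this

include hp h2 in
/-- A finite subgroup of `SL₂(K)` containing `-1`, `uu 1` and `vv l` contains all `uu a` with `a`
in some subfield containing `l`, unless `p = 3`, the group has order `120` and `l` satisfies a
small equation. -/
theorem subfield_or_exceptional (h1G : uu (1 : K) ∈ G) (hm : -1 ∈ G) (l : K) (hl : l ≠ 0)
    (hlG : vv l ∈ G) :
    (∃ L : Subfield K, l ∈ L ∧ ∀ a ∈ L, uu a ∈ G) ∨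
    (p = 3 ∧ Fintype.card G = 120 ∧ (l = 1 ∨ l = -1 ∨ l ^ 2 = -1)) := by
  obtain ⟨h0, hq, m, t, e, b, hm1, ht, ht0, hmN, hst, he, hob, hfix⟩ :=
    orbit_structure G p h2 h1G hm l hl hlG
  have hG := card_orb_mul_card_stb (Γ := G) (OnePoint.infty : OnePoint K)
  have hGb := card_orb_mul_card_stb (Γ := G) b
  have har := arith (Nat.card (trn G)) m t e hq hm1 ht (by
    rw [← hmN, ← hst, hG, ← hGb, hob, he, hmN]) ht0
  rcases har with rfl | ⟨hq3, rfl, rfl, rfl⟩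
  · left
    exact subfield_of_small_orbit G h2 h1G h0 (by rw [hmN, one_mul]) l hlG
  right
  have := finite_trn G
  rw [hq3] at hmN hst hob
  have hp3 : p = 3 := by
    have h3 : Nat.card (trn G) • (⟨1, h1G⟩ : trn G) = 0 := card_nsmul_eq_zero'
    have h4 : ((Nat.card (trn G) : ℕ) : K) = 0 := by
      have := congrArg Subtype.val h3
      simpa [hq3] using this
    rw [hq3, CharP.cast_eq_zero_iff K p] at h4
    exact (Nat.prime_dvd_prime_iff_eq hp.out Nat.prime_three).1 h4
  have h3 : (3 : K) = 0 := by
    have := CharP.cast_eq_zero K p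
    rw [hp3] at this
    exact_mod_cast this
  refine ⟨hp3, ?_, ?_⟩
  · rw [← hG, hmN, hst]
  have key : ∀ g ∈ G, g 0 0 + g 1 1 = 0 ∨ (g 0 0 + g 1 1) ^ 2 = 1 ∨
      ((g 0 0 + g 1 1) ^ 2 + (g 0 0 + g 1 1) - 1) *
        ((g 0 0 + g 1 1) ^ 2 - (g 0 0 + g 1 1) - 1) = 0 := by
    intro g hg
    by_cases h4 : (g 0 0 + g 1 1) ^ 2 = 4
    · right; left
      linear_combination h4 + h3
    obtain ⟨z, hz⟩ := IsAlgClosed.exists_root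
      (Polynomial.X ^ 2 - Polynomial.C (g 0 0 + g 1 1) * Polynomial.X + 1) (by
        have : (Polynomial.X ^ 2 - Polynomial.C (g 0 0 + g 1 1) * Polynomial.X + 1 :
          Polynomial K).degree = 2 := by compute_degree!
        rw [this]; norm_num)
    have hz' : z ^ 2 - (g 0 0 + g 1 1) * z + 1 = 0 := by simpa [Polynomial.IsRoot] using hz
    refine trace_list h3 z _ hz' ?_
    obtain ⟨a, ha⟩ : ∃ a : OnePoint K, g • a = a := by
      obtain ⟨a, a', _, ha⟩ := two_fix h2 g h4
      exact ⟨a, (ha a).2 (Or.inl rfl)⟩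
    rcases hfix ⟨g, hg⟩ (by rintro rfl; apply h4; simp [one_00]; norm_num)
      (by rintro rfl; apply h4; simp [one_00, neg_ij]; norm_num) a ha with h | h
    · left
      refine eigen_pow g z hz' 12 ?_
      have := pow_card_stb G a ⟨g, hg⟩ ha _ h
      rw [hst] at this
      exact congrArg Subtype.val this
    · right
      refine eigen_pow g z hz' 10 ?_
      have := pow_card_stb G a ⟨g, hg⟩ ha _ h
      rw [he] at this
      exact congrArg Subtype.val this
  have k1 := key _ (G.mul_mem h1G hlG)
  have k2 := key _ (G.mul_mem (G.inv_mem h1G) hlG)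
  simp only [mul_00, mul_11, inv_00, inv_01, inv_10, inv_11, uu_00, uu_01, uu_10, uu_11, vv_00,
    vv_01, vv_10, vv_11] at k1 k2
  have e1 : (1 : K) * 1 + 1 * l + (0 * 0 + 1 * 1) = l + 2 := by ring
  have e2 : (1 : K) * 1 + -1 * l + (-0 * 0 + 1 * 1) = 2 - l := by ring
  rw [e1] at k1
  rw [e2] at k2
  exact (l_list h3 l k1 k2).resolve_left hl

end FiniteSubgroup

/-! ### Descent to the finite field -/

section Transfer

variable {k : Type*} [Field k]

/-- All translations together with one nontrivial lower triangular transvection generate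
`SL₂(k)`. -/
lemma eq_top_of_uu (G : Subgroup (SpecialLinearGroup (Fin 2) k)) (hu : ∀ a : k, uu a ∈ G) (l : k)
    (hl : l ≠ 0) (hv : vv l ∈ G) : G = ⊤ := by
  set w : SpecialLinearGroup (Fin 2) k := uu (-l⁻¹) * vv l * uu (-l⁻¹) with hw
  have hwG : w ∈ G := G.mul_mem (G.mul_mem (hu _) hv) (hu _)
  have hv' : ∀ c : k, vv c ∈ G := by
    intro c
    have : w * uu (-c / l ^ 2) * w⁻¹ = vv c := by
      apply sl2_ext <;>
        simp only [hw, mul_00, mul_01, mul_10, mul_11, inv_00, inv_01, inv_10, inv_11, uu_00,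
          uu_01, uu_10, uu_11, vv_00, vv_01, vv_10, vv_11] <;> field_simp <;> ring
    rw [← this]
    exact G.mul_mem (G.mul_mem hwG (hu _)) (G.inv_mem hwG)
  have hc : ∀ g : SpecialLinearGroup (Fin 2) k, g 1 0 ≠ 0 → g ∈ G := by
    intro g hg
    have hd := sl2_det g
    have : g = uu ((g 0 0 - 1) / g 1 0) * vv (g 1 0) * uu ((g 1 1 - 1) / g 1 0) := by
      apply sl2_ext <;>
        simp only [mul_00, mul_01, mul_10, mul_11, uu_00,
          uu_01, uu_10, uu_11, vv_00, vv_01, vv_10, vv_11] <;> field_simp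
      · ring
      · linear_combination -hd
      · ring
      · ring
    rw [this]
    exact G.mul_mem (G.mul_mem (hu _) (hv' _)) (hu _)
  refine (Subgroup.eq_top_iff' G).2 fun g => ?_
  by_cases hg : g 1 0 = 0
  · have hd := sl2_det g
    have h1 : vv 1 * g ∈ G := by
      apply hc
      simp only [mul_10, vv_10, vv_11, hg]
      intro h
      have : g 0 0 = 0 := by linear_combination h
      rw [this, hg] at hd
      simp at hd
    have := G.mul_mem (G.inv_mem (hv' 1)) h1
    rwa [inv_mul_cancel_left] at this
  · exact hc g hg

/-- The subgroup `G ∪ -G`. -/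
def pm (G : Subgroup (SpecialLinearGroup (Fin 2) k)) :
    Subgroup (SpecialLinearGroup (Fin 2) k) where
  carrier := {g | g ∈ G ∨ -g ∈ G}
  one_mem' := Or.inl G.one_mem
  mul_mem' := by
    rintro a b (ha | ha) (hb | hb)
    · exact Or.inl (G.mul_mem ha hb)
    · exact Or.inr (by simpa using G.mul_mem ha hb)
    · exact Or.inr (by simpa using G.mul_mem ha hb)
    · exact Or.inl (by simpa using G.mul_mem ha hb)
  inv_mem' := by
    have e : ∀ a : SpecialLinearGroup (Fin 2) k, (-a)⁻¹ = -a⁻¹ := by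
      intro a
      rw [inv_eq_iff_mul_eq_one]
      simp
    rintro a (ha | ha)
    · exact Or.inl (G.inv_mem ha)
    · exact Or.inr (by rw [← e]; exact G.inv_mem ha)

lemma mem_pm {G : Subgroup (SpecialLinearGroup (Fin 2) k)} {g : SpecialLinearGroup (Fin 2) k} :
    g ∈ pm G ↔ g ∈ G ∨ -g ∈ G := Iff.rfl

lemma map_uu {K : Type*} [Field K] (f : k →+* K) (a : k) :
    SpecialLinearGroup.map f (uu a) = uu (f a) := by
  apply sl2_ext <;> simp [SpecialLinearGroup.map_apply_coe]

lemma map_vv {K : Type*} [Field K] (f : k →+* K) (a : k) :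
    SpecialLinearGroup.map f (vv a) = vv (f a) := by
  apply sl2_ext <;> simp [SpecialLinearGroup.map_apply_coe]

lemma sl_map_injective {K : Type*} [Field K] (f : k →+* K) :
    Function.Injective (SpecialLinearGroup.map (n := Fin 2) f) := by
  intro A B h
  have := fun i j => congrArg (fun g : SpecialLinearGroup (Fin 2) K => g i j) h
  simp only [SpecialLinearGroup.map_apply_coe, RingHom.mapMatrix_apply, Matrix.map_apply] at this
  exact sl2_ext (f.injective (this 0 0)) (f.injective (this 0 1)) (f.injective (this 1 0))
    (f.injective (this 1 1))

lemma uu_natCast {G : Subgroup (SpecialLinearGroup (Fin 2) k)} (h : uu (1 : k) ∈ G) (n : ℕ) :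
    uu (n : k) ∈ G := by
  induction n with
  | zero => rw [Nat.cast_zero, uu_zero]; exact G.one_mem
  | succ n ih => rw [Nat.cast_succ, uu_add]; exact G.mul_mem ih h

/-- Dickson's dichotomy for the group generated by `uu 1` and `vv l` over the finite field generated
by `l`. -/
theorem dickson (k : Type*) [Field k] [Finite k] (p : ℕ) [hp : Fact p.Prime] [CharP k p]
    (h2 : (2 : k) ≠ 0)
    (l : k) (hl : l ≠ 0) (hgen : Subfield.closure {l} = ⊤)
    (G : Subgroup (SpecialLinearGroup (Fin 2) k)) (h1 : uu 1 ∈ G) (hv : vv l ∈ G) :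
    G = ⊤ ∨ (p = 3 ∧ Nat.card (pm G) = 120 ∧ l ^ 2 = -1) := by
  classical
  let K := AlgebraicClosure k
  let f : k →+* K := algebraMap k K
  have : CharP K p := charP_of_injective_ringHom f.injective p
  let M := (pm G).map (SpecialLinearGroup.map f)
  have : Finite (SpecialLinearGroup (Fin 2) k) := by
    unfold Matrix.SpecialLinearGroup
    infer_instance
  have : Finite M := Finite.of_surjective _
    ((pm G).equivMapOfInjective _ (sl_map_injective f)).surjective
  let _ : Fintype M := Fintype.ofFinite M
  have hcard : Fintype.card M = Nat.card (pm G) := by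
    rw [← Nat.card_eq_fintype_card]
    exact (Nat.card_congr ((pm G).equivMapOfInjective _ (sl_map_injective f)).toEquiv).symm
  have h2K : (2 : K) ≠ 0 := by
    intro h
    apply h2
    apply f.injective
    rw [map_ofNat, h, map_zero]
  have hm : (-1 : SpecialLinearGroup (Fin 2) K) ∈ M := by
    refine ⟨-1, mem_pm.2 (Or.inr ?_), ?_⟩
    · rw [neg_neg]; exact G.one_mem
    · apply sl2_ext <;> simp [SpecialLinearGroup.map_apply_coe]
  rcases subfield_or_exceptional M p h2K ⟨uu 1, mem_pm.2 (Or.inl h1), by rw [map_uu, map_one]⟩ hm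
    (f l) ((map_ne_zero f).2 hl) ⟨vv l, mem_pm.2 (Or.inl hv), map_vv f l⟩ with
    ⟨L, hL, hLu⟩ | ⟨hp3, h120, hll⟩
  · left
    have hcl : ∀ a : k, f a ∈ L := by
      intro a
      have : a ∈ Subfield.closure {l} := by rw [hgen]; trivial
      have hle : Subfield.closure {l} ≤ L.comap f := by
        rw [Subfield.closure_le, Set.singleton_subset_iff]
        exact hL
      exact hle this
    refine eq_top_of_uu G (fun a => ?_) l hl hv
    have : NeZero (2 : k) := ⟨h2⟩
    -- only the square of an element of `G ∪ -G` is known to lie in `G`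
    have hpm : uu (a / 2) ∈ pm G := by
      obtain ⟨g, hg, hgu⟩ := hLu _ (hcl (a / 2))
      rw [← map_uu] at hgu
      rwa [← sl_map_injective f hgu]
    have : uu a = uu (a / 2) * uu (a / 2) := by
      rw [← uu_add, add_halves]
    rw [this]
    rcases mem_pm.1 hpm with h | h
    · exact G.mul_mem h h
    · simpa using G.mul_mem h h
  · have hcase : l = 1 ∨ l = -1 ∨ l ^ 2 = -1 := by
      rcases hll with h | h | h
      · left; apply f.injective; rw [h, map_one]
      · right; left; apply f.injective; rw [h, map_neg, map_one]
      · right; right; apply f.injective; rw [map_pow, h, map_neg, map_one]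
    by_cases hl2 : l ^ 2 = -1
    · exact Or.inr ⟨hp3, by rw [← hcard, h120], hl2⟩
    · left
      have hprime : l ∈ (ZMod.castHom (dvd_refl p) k).fieldRange := by
        rcases hcase with h | h | h
        · rw [h]; exact one_mem _
        · rw [h]; exact neg_mem (one_mem _)
        · exact (hl2 h).elim
      refine eq_top_of_uu G (fun a => ?_) l hl hv
      have : a ∈ (ZMod.castHom (dvd_refl p) k).fieldRange := by
        have hle : Subfield.closure {l} ≤ (ZMod.castHom (dvd_refl p) k).fieldRange := by
          rwa [Subfield.closure_le, Set.singleton_subset_iff]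
        exact hle (by rw [hgen]; trivial)
      obtain ⟨n, rfl⟩ := this
      have := uu_natCast h1 n.val
      rwa [← map_natCast (ZMod.castHom (dvd_refl p) k), ZMod.natCast_val, ZMod.cast_id] at this

end Transfer

/-! ### The exceptional group of order 120 -/

section Exceptional

variable {k : Type*} [Field k]

/-- Five Hermitian `2 × 2` matrices with sum zero, where `l ^ 2 = -1` and `k` has characteristic
three; conjugation on `k` is the Frobenius map, which sends `l` to `-l`. -/
def herm (l : k) : Fin 5 → Matrix (Fin 2) (Fin 2) k
  | 0 => !![0, 1; 1, 1]
  | 1 => !![0, -1; -1, 1]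
  | 2 => !![-1, 0; 0, 1]
  | 3 => !![-1, l; -l, 0]
  | 4 => !![-1, -l; l, 0]

/-- The action of `SL₂` on Hermitian forms, with respect to the conjugation `τ`. -/
def hact (τ : k →+* k) (g : SpecialLinearGroup (Fin 2) k) (h : Matrix (Fin 2) (Fin 2) k) :
    Matrix (Fin 2) (Fin 2) k :=
  g.1 * h * (g.1.map τ)ᵀ

lemma hact_mul (τ : k →+* k) (g g' : SpecialLinearGroup (Fin 2) k)
    (h : Matrix (Fin 2) (Fin 2) k) : hact τ (g * g') h = hact τ g (hact τ g' h) := by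
  simp only [hact, Matrix.SpecialLinearGroup.coe_mul, Matrix.map_mul, Matrix.transpose_mul,
    Matrix.mul_assoc]

lemma hact_one (τ : k →+* k) (h : Matrix (Fin 2) (Fin 2) k) : hact τ 1 h = h := by
  simp [hact]

/-- The permutation of the five forms induced by `uu 1`. -/
def cyc₁ : Equiv.Perm (Fin 5) := Equiv.swap 0 1 * Equiv.swap 1 2

/-- The permutation of the five forms induced by `vv l`. -/
def cyc₂ : Equiv.Perm (Fin 5) := Equiv.swap 2 3 * Equiv.swap 3 4

lemma hact_uu (τ : k →+* k) (l : k) (h3 : (3 : k) = 0) (j : Fin 5) :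
    hact τ (uu 1) (herm l j) = herm l (cyc₁ j) := by
  have hc : cyc₁ 0 = 1 ∧ cyc₁ 1 = 2 ∧ cyc₁ 2 = 0 ∧ cyc₁ 3 = 3 ∧ cyc₁ 4 = 4 := by decide
  obtain ⟨h0, h1, h2, h3', h4⟩ := hc
  fin_cases j <;> simp only [Fin.zero_eta, Fin.mk_one, Fin.reduceFinMk, h0, h1, h2, h3', h4] <;>
    ext a b <;> fin_cases a <;> fin_cases b <;>
    simp [hact, herm, uu, Matrix.mul_apply, Fin.sum_univ_two] <;> grind

lemma hact_vv (τ : k →+* k) (l : k) (h3 : (3 : k) = 0) (hl : l ^ 2 = -1) (hτ : τ l = -l)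
    (j : Fin 5) : hact τ (vv l) (herm l j) = herm l (cyc₂ j) := by
  have hc : cyc₂ 0 = 0 ∧ cyc₂ 1 = 1 ∧ cyc₂ 2 = 3 ∧ cyc₂ 3 = 4 ∧ cyc₂ 4 = 2 := by decide
  obtain ⟨h0, h1, h2, h3', h4⟩ := hc
  fin_cases j <;> simp only [Fin.zero_eta, Fin.mk_one, Fin.reduceFinMk, h0, h1, h2, h3', h4] <;>
    ext a b <;> fin_cases a <;> fin_cases b <;>
    simp [hact, herm, vv, Matrix.mul_apply, Fin.sum_univ_two, hτ] <;> grind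

lemma herm_injective (l : k) (h2 : (2 : k) ≠ 0) (hl0 : l ≠ 0) :
    Function.Injective (herm l) := by
  intro a b h
  have e : ∀ i j, herm l a i j = herm l b i j := fun i j => by rw [h]
  have e00 := e 0 0
  have e01 := e 0 1
  have e11 := e 1 1
  fin_cases a <;> fin_cases b <;> simp [herm] at e00 e01 e11 ⊢ <;> grind

/-- Two three-cycles of five letters sharing one letter generate the alternating group. -/
lemma closure_cyc : Subgroup.closure {cyc₁, cyc₂} = alternatingGroup (Fin 5) := by
  apply le_antisymm
  · rw [Subgroup.closure_le]
    rintro x (rfl | rfl)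
    · exact (show Equiv.Perm.sign cyc₁ = 1 by decide)
    · exact (show Equiv.Perm.sign cyc₂ = 1 by decide)
  · set S := Subgroup.closure {cyc₁, cyc₂} with hS
    have m1 : cyc₁ ∈ S := Subgroup.subset_closure (Or.inl rfl)
    have m2 : cyc₂ ∈ S := Subgroup.subset_closure (Or.inr rfl)
    have htrans : MulAction.IsPretransitive S (Fin 5) := by
      -- every letter is the image of the common letter
      have key : ∀ x : Fin 5, ∃ g : S, g • (2 : Fin 5) = x := by
        intro x
        have hx : (cyc₁ (2 : Fin 5) = 0 ∧ (cyc₁ * cyc₁) (2 : Fin 5) = 1) ∧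
            (1 : Equiv.Perm (Fin 5)) 2 = 2 ∧ cyc₂ (2 : Fin 5) = 3 ∧
            (cyc₂ * cyc₂) (2 : Fin 5) = 4 := by decide
        fin_cases x
        · exact ⟨⟨_, m1⟩, hx.1.1⟩
        · exact ⟨⟨_, S.mul_mem m1 m1⟩, hx.1.2⟩
        · exact ⟨⟨_, S.one_mem⟩, hx.2.1⟩
        · exact ⟨⟨_, m2⟩, hx.2.2.1⟩
        · exact ⟨⟨_, S.mul_mem m2 m2⟩, hx.2.2.2⟩
      refine ⟨fun x y => ?_⟩
      obtain ⟨g, rfl⟩ := key x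
      obtain ⟨h, rfl⟩ := key y
      exact ⟨h * g⁻¹, by rw [mul_smul, inv_smul_smul]⟩
    have hprim : MulAction.IsPreprimitive S (Fin 5) :=
      MulAction.IsPreprimitive.of_prime_card (by rw [Nat.card_eq_fintype_card, Fintype.card_fin]; norm_num)
    refine Equiv.Perm.alternatingGroup_le_of_isPreprimitive_of_isThreeCycle_mem hprim
      (g := cyc₁) ?_ m1
    rw [← card_support_eq_three_iff]
    decide

/-- In characteristic three with `l ^ 2 = -1`, the product `uu 1 * vv l` has order ten. -/
lemma neg_one_mem_exc (G : Subgroup (SpecialLinearGroup (Fin 2) k)) (h1 : uu 1 ∈ G) (l : k)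
    (hv : vv l ∈ G) (h3 : (3 : k) = 0) (hl : l ^ 2 = -1) : -1 ∈ G := by
  have hg := G.mul_mem h1 hv
  have e2 := G.mul_mem hg hg
  have e4 := G.mul_mem e2 e2
  have e5 := G.mul_mem e4 hg
  convert e5 using 1
  apply sl2_ext <;>
    simp only [neg_ij, one_00, one_01, one_10, one_11, mul_00, mul_01, mul_10, mul_11, uu_00,
      uu_01, uu_10, uu_11, vv_00, vv_01, vv_10, vv_11] <;> grind

/-- In the exceptional case the group permutes five Hermitian forms, and this identifies its image
modulo the center with the alternating group of degree five. -/
theorem exceptional_image [CharP k 3] (l : k) (hl : l ^ 2 = -1)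
    (G : Subgroup (SpecialLinearGroup (Fin 2) k)) (hG : G = Subgroup.closure {uu 1, vv l})
    (hcard : Nat.card (pm G) = 120) :
    Nonempty (Subgroup.map (QuotientGroup.mk' (Subgroup.center (SpecialLinearGroup (Fin 2) k))) G
      ≃* alternatingGroup (Fin 5)) := by
  have h3 : (3 : k) = 0 := by exact_mod_cast CharP.cast_eq_zero k 3
  have h2 : (2 : k) ≠ 0 := by
    intro h
    have : (1 : k) = 0 := by linear_combination h3 - h
    exact one_ne_zero this
  have hl0 : l ≠ 0 := by
    rintro rfl
    norm_num at hl
  have : Fact (Nat.Prime 3) := ⟨Nat.prime_three⟩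
  set τ : k →+* k := frobenius k 3 with hτdef
  have hτ : τ l = -l := by
    rw [hτdef, frobenius_def]
    linear_combination l * hl
  have h1G : uu 1 ∈ G := by rw [hG]; exact Subgroup.subset_closure (Or.inl rfl)
  have hvG : vv l ∈ G := by rw [hG]; exact Subgroup.subset_closure (Or.inr rfl)
  have hm := neg_one_mem_exc G h1G l hvG h3 hl
  have hinj := herm_injective l h2 hl0
  have hpm : pm G = G := by
    refine le_antisymm ?_ fun g hg => Or.inl hg
    rintro g (hg | hg)
    · exact hg
    · simpa using G.mul_mem hm hg
  rw [hpm] at hcard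
  have hex : ∀ g ∈ G, ∃ σ : Equiv.Perm (Fin 5), ∀ j, hact τ g (herm l j) = herm l (σ j) := by
    intro g hg
    rw [hG] at hg
    induction hg using Subgroup.closure_induction with
    | mem x hx =>
      rcases hx with rfl | rfl
      · exact ⟨cyc₁, hact_uu τ l h3⟩
      · exact ⟨cyc₂, hact_vv τ l h3 hl hτ⟩
    | one => exact ⟨1, fun j => hact_one _ _⟩
    | mul x y _ _ hx hy =>
      obtain ⟨σ, hσ⟩ := hx
      obtain ⟨ρ, hρ⟩ := hy
      exact ⟨σ * ρ, fun j => by rw [hact_mul, hρ, hσ]; rfl⟩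
    | inv x _ hx =>
      obtain ⟨σ, hσ⟩ := hx
      refine ⟨σ⁻¹, fun j => ?_⟩
      have := hσ (σ⁻¹ j)
      rw [show σ (σ⁻¹ j) = j from σ.apply_symm_apply j] at this
      rw [← this, ← hact_mul, inv_mul_cancel, hact_one]
  choose! F hF using hex
  let f : G →* Equiv.Perm (Fin 5) := MonoidHom.mk' (fun g => F g.1) (by
    intro a b
    refine Equiv.ext fun j => hinj ?_
    rw [← hF _ (a * b).2, Subgroup.coe_mul, hact_mul, hF _ b.2, hF _ a.2]
    rfl)
  have hf : ∀ g : G, f g = F g.1 := fun _ => rfl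
  have f1 : f ⟨uu 1, h1G⟩ = cyc₁ := Equiv.ext fun j => hinj (by
    rw [hf, ← hF _ h1G, hact_uu τ l h3])
  have f2 : f ⟨vv l, hvG⟩ = cyc₂ := Equiv.ext fun j => hinj (by
    rw [hf, ← hF _ hvG, hact_vv τ l h3 hl hτ])
  have hrange : f.range = alternatingGroup (Fin 5) := by
    rw [← closure_cyc]
    have htop : (⊤ : Subgroup G) = Subgroup.closure {⟨uu 1, h1G⟩, ⟨vv l, hvG⟩} := by
      symm
      have hpre : ({⟨uu 1, h1G⟩, ⟨vv l, hvG⟩} : Set G) =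
          (Subtype.val : G → SpecialLinearGroup (Fin 2) k) ⁻¹' {uu 1, vv l} := by
        ext x
        simp [Subtype.ext_iff]
      rw [hpre]
      subst hG
      exact Subgroup.closure_closure_coe_preimage
    rw [MonoidHom.range_eq_map, htop, MonoidHom.map_closure, Set.image_pair, f1, f2]
  have hfin : Finite G := Nat.finite_of_card_ne_zero (by omega)
  have hA : Nat.card (alternatingGroup (Fin 5)) = 60 := by
    have := two_mul_nat_card_alternatingGroup (α := Fin 5)
    rw [Nat.card_perm, Nat.card_eq_fintype_card (α := Fin 5), Fintype.card_fin] at this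
    have h5 : Nat.factorial 5 = 120 := rfl
    omega
  have hker : Nat.card f.ker = 2 := by
    have h := Subgroup.card_mul_index f.ker
    rw [Subgroup.index_ker, hrange, hA, hcard] at h
    omega
  have hmne : (⟨-1, hm⟩ : G) ≠ 1 := by
    intro h
    have h' := congrArg (fun g : G => g.1 0 0) h
    simp [neg_ij] at h'
    apply h2
    linear_combination -h'
  have hmker : (⟨-1, hm⟩ : G) ∈ f.ker := by
    rw [MonoidHom.mem_ker]
    refine Equiv.ext fun j => hinj ?_
    rw [hf, ← hF _ hm]
    simp [hact, Matrix.map_neg]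
  -- both the kernel and the intersection of `G` with the center equal `{1, -1}`
  have hkeriff : ∀ g : G, g ∈ f.ker ↔ g = 1 ∨ g = ⟨-1, hm⟩ := by
    intro g
    constructor
    · intro hg
      have hset : ({1, ⟨-1, hm⟩} : Set G) = f.ker := by
        refine Set.eq_of_subset_of_ncard_le ?_ ?_ (Set.toFinite _)
        · rintro x (rfl | rfl)
          · exact one_mem _
          · exact hmker
        · rw [Set.ncard_pair hmne.symm]
          exact hker.le
      have : g ∈ ({1, ⟨-1, hm⟩} : Set G) := by rw [hset]; exact hg
      exact this
    · rintro (rfl | rfl)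
      · exact one_mem _
      · exact hmker
  let r : G →* SpecialLinearGroup (Fin 2) k ⧸ Subgroup.center (SpecialLinearGroup (Fin 2) k) :=
    (QuotientGroup.mk' (Subgroup.center (SpecialLinearGroup (Fin 2) k))).comp G.subtype
  have hrrange : r.range = Subgroup.map
      (QuotientGroup.mk' (Subgroup.center (SpecialLinearGroup (Fin 2) k))) G := by
    rw [MonoidHom.range_comp, Subgroup.range_subtype]
  have hrker : r.ker = f.ker := by
    ext g
    rw [hkeriff, MonoidHom.mem_ker]
    change (QuotientGroup.mk' (Subgroup.center (SpecialLinearGroup (Fin 2) k))) g.1 = 1 ↔ _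
    rw [← MonoidHom.mem_ker, QuotientGroup.ker_mk', Matrix.SpecialLinearGroup.mem_center_iff]
    constructor
    · rintro ⟨c, hc, hcg⟩
      rw [Fintype.card_fin] at hc
      have e : ∀ i j, Matrix.scalar (Fin 2) c i j = g.1 i j := fun i j => by rw [hcg]
      rcases mul_eq_zero.1 (show (c - 1) * (c + 1) = 0 by linear_combination hc) with h | h
      · left
        have : c = 1 := by linear_combination h
        subst this
        refine Subtype.ext (sl2_ext ?_ ?_ ?_ ?_) <;> rw [← e] <;> simp [one_00, one_01, one_10, one_11]
      · right
        have : c = -1 := by linear_combination h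
        subst this
        refine Subtype.ext (sl2_ext ?_ ?_ ?_ ?_) <;> rw [← e] <;>
          simp [neg_ij, one_00, one_01, one_10, one_11]
    · rintro (rfl | rfl)
      · exact ⟨1, by simp, by simp⟩
      · exact ⟨-1, by simp, by ext i j; fin_cases i <;> fin_cases j <;> simp⟩
  rw [← hrrange, ← hrange]
  exact ⟨(QuotientGroup.quotientKerEquivRange r).symm.trans
    ((QuotientGroup.quotientMulEquivOfEq hrker).trans (QuotientGroup.quotientKerEquivRange f))⟩

/-- In the exceptional case a conjugate of the standard `SL₂` over the prime field lies in the
group. -/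
lemma exc_conj (G : Subgroup (SpecialLinearGroup (Fin 2) k)) (h1 : uu 1 ∈ G) (l : k)
    (hv : vv l ∈ G) (hl : l ^ 2 = -1) : uu l * vv 1 * (uu l)⁻¹ ∈ G := by
  have := G.mul_mem (G.mul_mem (G.inv_mem hv) h1) hv
  convert this using 1
  apply sl2_ext <;>
    simp only [mul_00, mul_01, mul_10, mul_11, inv_00, inv_01, inv_10, inv_11, uu_00,
      uu_01, uu_10, uu_11, vv_00, vv_01, vv_10, vv_11] <;> grind

end Exceptional

/-! ### Embedding into the ambient group -/

section Embedding

/-- Conjugation by `diag(1, β⁻¹)` embeds `SL₂` of a subfield into `SL₂` of the field, sending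
`uu 1` to `uu β` and `vv (β ^ 2)` to `vv β`. -/
def twist {F : Type*} [Field F] (F₀ : Subfield F) (β : F) (hβ : β ≠ 0) :
    SpecialLinearGroup (Fin 2) F₀ →* SpecialLinearGroup (Fin 2) F :=
  MonoidHom.mk' (fun g => ⟨!![(g 0 0 : F), β * (g 0 1 : F); β⁻¹ * (g 1 0 : F), (g 1 1 : F)], by
      have hd := congrArg (fun a : F₀ => (a : F)) (sl2_det g)
      push_cast at hd
      rw [Matrix.det_fin_two_of]
      field_simp
      exact hd⟩) (by
    intro a b
    refine Subtype.ext ?_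
    change !![((a * b) 0 0 : F), β * ((a * b) 0 1 : F); β⁻¹ * ((a * b) 1 0 : F), ((a * b) 1 1 : F)]
      = !![(a 0 0 : F), β * (a 0 1 : F); β⁻¹ * (a 1 0 : F), (a 1 1 : F)] *
        !![(b 0 0 : F), β * (b 0 1 : F); β⁻¹ * (b 1 0 : F), (b 1 1 : F)]
    rw [Matrix.mul_fin_two, mul_00, mul_01, mul_10, mul_11]
    push_cast
    congr 4 <;> field_simp)

variable {F : Type*} [Field F] (F₀ : Subfield F) (β : F) (hβ : β ≠ 0)

lemma twist_coe (g : SpecialLinearGroup (Fin 2) F₀) :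
    (twist F₀ β hβ g).1 = !![(g 0 0 : F), β * (g 0 1 : F); β⁻¹ * (g 1 0 : F), (g 1 1 : F)] := rfl

lemma twist_injective : Function.Injective (twist F₀ β hβ) := by
  intro a b h
  have e : ∀ i j, (twist F₀ β hβ a).1 i j = (twist F₀ β hβ b).1 i j := fun i j => by rw [h]
  have e00 := e 0 0
  have e01 := e 0 1
  have e10 := e 1 0
  have e11 := e 1 1
  simp [twist_coe, hβ] at e00 e01 e10 e11
  exact sl2_ext e00 e01 e10 e11

end Embedding

section Final

/-- `SL₂` of the prime field is generated by its two standard transvections. -/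
lemma sl_zmod_generated (p : ℕ) [Fact p.Prime] :
    Subgroup.closure {uu (1 : ZMod p), vv (1 : ZMod p)} = ⊤ := by
  refine eq_top_of_uu _ (fun a => ?_) 1 one_ne_zero (Subgroup.subset_closure (Or.inr rfl))
  have := uu_natCast (k := ZMod p) (G := Subgroup.closure {uu (1 : ZMod p), vv (1 : ZMod p)})
    (Subgroup.subset_closure (Or.inl rfl)) a.val
  rwa [ZMod.natCast_val, ZMod.cast_id] at this

lemma zmod_three_anisotropic : ∀ u v : ZMod 3, u ^ 2 + v ^ 2 = 0 → u = 0 ∧ v = 0 := by decide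

/-- A finite field of characteristic three generated by a square root of `-1` has nine elements. -/
lemma card_eq_nine (k : Type*) [Field k] [Finite k] [CharP k 3] (l : k) (hl : l ^ 2 = -1)
    (hgen : Subfield.closure {l} = ⊤) : Nat.card k = 9 := by
  classical
  have : Fact (Nat.Prime 3) := ⟨Nat.prime_three⟩
  have h3 : (3 : k) = 0 := by exact_mod_cast CharP.cast_eq_zero k 3
  let _ := Fintype.ofFinite k
  apply le_antisymm
  · -- every element is a root of `X ^ 9 - X`
    have hroot : ∀ a : k, a ^ 9 = a := by
      intro a
      have hle : Subfield.closure {l} ≤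
          RingHom.eqLocusField (iterateFrobenius k 3 2) (RingHom.id k) := by
        rw [Subfield.closure_le, Set.singleton_subset_iff]
        change iterateFrobenius k 3 2 l = l
        rw [iterateFrobenius_def]
        have : l ^ 4 = 1 := by linear_combination (l ^ 2 - 1) * hl
        linear_combination l * (l ^ 4 + 1) * this
      have ha : iterateFrobenius k 3 2 a = a := hle (by rw [hgen]; trivial)
      rw [iterateFrobenius_def] at ha
      exact ha
    have hdeg : (Polynomial.X ^ 9 - Polynomial.X : Polynomial k).natDegree = 9 := by
      compute_degree!
    have hne : (Polynomial.X ^ 9 - Polynomial.X : Polynomial k) ≠ 0 := by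
      intro h
      rw [h] at hdeg
      simp at hdeg
    have hsub : (Finset.univ : Finset k) ⊆
        (Polynomial.X ^ 9 - Polynomial.X : Polynomial k).roots.toFinset := by
      intro a _
      rw [Multiset.mem_toFinset, Polynomial.mem_roots hne]
      simp [Polynomial.IsRoot, hroot a]
    rw [Nat.card_eq_fintype_card, ← Finset.card_univ]
    calc _ ≤ _ := Finset.card_le_card hsub
      _ ≤ _ := Multiset.toFinset_card_le _
      _ ≤ _ := Polynomial.card_roots' _
      _ = 9 := hdeg
  · -- the elements `a + b * l` with `a`, `b` in the prime field are distinct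
    let c := ZMod.castHom (dvd_refl 3) k
    have hinj : Function.Injective (fun x : ZMod 3 × ZMod 3 => c x.1 + c x.2 * l) := by
      rintro ⟨a, b⟩ ⟨a', b'⟩ h
      have hab : c (a - a') = -c (b - b') * l := by
        rw [map_sub, map_sub]
        linear_combination h
      have hsq : c ((a - a') ^ 2 + (b - b') ^ 2) = 0 := by
        rw [map_add, map_pow, map_pow, hab]
        linear_combination c (b - b') ^ 2 * hl
      have h0 := (map_eq_zero c).1 hsq
      obtain ⟨e1, e2⟩ := zmod_three_anisotropic _ _ h0
      exact Prod.ext (sub_eq_zero.1 e1) (sub_eq_zero.1 e2)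
    have := Nat.card_le_card_of_injective _ hinj
    simpa using this

lemma exists_subgroup_of_hom {A B : Type*} [Group A] [Group B] (f : A →* B)
    (hf : Function.Injective f) (H : Subgroup B) (h : f.range ≤ H) :
    ∃ K' : Subgroup B, K' ≤ H ∧ Nonempty (K' ≃* A) :=
  ⟨f.range, h, ⟨(MonoidHom.ofInjective hf).symm⟩⟩

end Final

theorem statement_6 (F : Type) [Field F] [Fintype F]
    (p : ℕ) [CharP F p] (hp : p.Prime) (hpodd : Odd p)
    (β : F) (hβ : β ≠ 0)
    -- `F₀` is the subfield of `F` generated by `β²`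
    (F₀ : Subfield F) (hF₀ : F₀ = Subfield.closure {β ^ 2})
    (x y : Matrix.SpecialLinearGroup (Fin 2) F)
    (hx : (x : Matrix (Fin 2) (Fin 2) F) = !![1, 0; β, 1])
    (hy : (y : Matrix (Fin 2) (Fin 2) F) = !![1, β; 0, 1])
    (H : Subgroup (Matrix.SpecialLinearGroup (Fin 2) F))
    (hH : H = Subgroup.closure {x, y}) :
    -- either `H ≅ SL₂(F₀)`, or `|F₀| = 9` and `H` is isomorphic to a subgroup of `SL₂(F₀)`
    -- whose image modulo the center of `SL₂(F₀)` is isomorphic to `A₅`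
    (Nonempty (↥H ≃* Matrix.SpecialLinearGroup (Fin 2) ↥F₀) ∨
      (Nat.card ↥F₀ = 9 ∧
        ∃ K : Subgroup (Matrix.SpecialLinearGroup (Fin 2) ↥F₀),
          Nonempty (↥H ≃* ↥K) ∧
          Nonempty (↥(Subgroup.map
              (QuotientGroup.mk' (Subgroup.center (Matrix.SpecialLinearGroup (Fin 2) ↥F₀))) K)
            ≃* alternatingGroup (Fin 5)))) ∧
    -- in all cases `H` contains a subgroup isomorphic to `SL₂(F_p)` …
    (∃ K' : Subgroup (Matrix.SpecialLinearGroup (Fin 2) F),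
      K' ≤ H ∧ Nonempty (↥K' ≃* Matrix.SpecialLinearGroup (Fin 2) (ZMod p))) ∧
    -- … and in particular the matrix `-1`, …
    negOneSL F ∈ H ∧
    -- … which is the unique element of order `2` of `SL₂(F)`
    orderOf (negOneSL F) = 2 ∧
    (∀ z : Matrix.SpecialLinearGroup (Fin 2) F, orderOf z = 2 → z = negOneSL F) := by
  classical
  have : Fact p.Prime := ⟨hp⟩
  have h2 : (2 : F) ≠ 0 := by
    intro h
    have h' : ((2 : ℕ) : F) = 0 := by exact_mod_cast h
    rw [CharP.cast_eq_zero_iff F p, Nat.prime_dvd_prime_iff_eq hp Nat.prime_two] at h'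
    rw [h'] at hpodd
    exact absurd hpodd (by decide)
  have hneg : negOneSL F = -1 := Subtype.ext (by simp [negOneSL])
  have hne : (-1 : SpecialLinearGroup (Fin 2) F) ≠ 1 := by
    intro h
    have h' := congrArg (fun g : SpecialLinearGroup (Fin 2) F => g 0 0) h
    simp [neg_ij] at h'
    apply h2
    linear_combination -h'
  have hβF : β ^ 2 ∈ F₀ := by rw [hF₀]; exact Subfield.subset_closure rfl
  set l : F₀ := ⟨β ^ 2, hβF⟩ with hldef
  have hl0 : l ≠ 0 := fun h => hβ (pow_eq_zero_iff (two_ne_zero) |>.1 (congrArg Subtype.val h))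
  have h20 : (2 : F₀) ≠ 0 := fun h => h2 (congrArg Subtype.val h)
  have hgen : Subfield.closure {l} = ⊤ := by
    rw [eq_top_iff]
    rintro a -
    have hle : F₀ ≤ (Subfield.closure {l}).map F₀.subtype := by
      conv_lhs => rw [hF₀]
      rw [Subfield.closure_le, Set.singleton_subset_iff]
      exact ⟨l, Subfield.subset_closure rfl, rfl⟩
    obtain ⟨b, hb, hba⟩ := hle a.2
    rwa [← Subtype.ext hba]
  have : CharP F₀ p := (RingHom.charP_iff F₀.subtype F₀.subtype.injective p).2 inferInstance
  set φ := twist F₀ β hβ with hφ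
  have hφinj : Function.Injective φ := twist_injective F₀ β hβ
  set G : Subgroup (SpecialLinearGroup (Fin 2) F₀) := Subgroup.closure {uu 1, vv l} with hG
  have h1G : uu 1 ∈ G := Subgroup.subset_closure (Or.inl rfl)
  have hvG : vv l ∈ G := Subgroup.subset_closure (Or.inr rfl)
  have hφu : φ (uu 1) = y := Subtype.ext (by rw [hφ, twist_coe, hy]; simp)
  have hφv : φ (vv l) = x := Subtype.ext (by
    rw [hφ, twist_coe, hx]
    have : β⁻¹ * β ^ 2 = β := by field_simp
    simp [hldef, this])
  have hHG : H = G.map φ := by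
    rw [hH, hG, MonoidHom.map_closure, Set.image_pair, hφu, hφv, Set.pair_comm]
  have e : H ≃* G := (MulEquiv.subgroupCongr hHG).trans (G.equivMapOfInjective φ hφinj).symm
  have hφneg : φ (-1) = -1 := by
    have := twist_coe F₀ β hβ (-1)
    refine Subtype.ext ?_
    rw [hφ, this]
    ext i j
    fin_cases i <;> fin_cases j <;> simp [neg_ij]
  let c := ZMod.castHom (dvd_refl p) F₀
  have hc : Function.Injective (SpecialLinearGroup.map (n := Fin 2) c) := sl_map_injective c
  have hfacts : orderOf (negOneSL F) = 2 ∧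
      ∀ z : SpecialLinearGroup (Fin 2) F, orderOf z = 2 → z = negOneSL F := by
    rw [hneg]
    refine ⟨orderOf_eq_prime (by simp) hne, fun z hz => ?_⟩
    have hz2 : z * z = 1 := by
      have := pow_orderOf_eq_one z
      rwa [hz, pow_two] at this
    have hz1 : z ≠ 1 := by
      rintro rfl
      simp at hz
    have hinv : z = z⁻¹ := eq_inv_of_mul_eq_one_left hz2
    have z00 : z 0 0 = z 1 1 := by rw [← inv_00, ← hinv]
    have z01 : z 0 1 = 0 := by
      have : z 0 1 = -z 0 1 := by rw [← inv_01, ← hinv]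
      have h' : 2 * z 0 1 = 0 := by linear_combination this
      exact (mul_eq_zero.1 h').resolve_left h2
    have z10 : z 1 0 = 0 := by
      have : z 1 0 = -z 1 0 := by rw [← inv_10, ← hinv]
      have h' : 2 * z 1 0 = 0 := by linear_combination this
      exact (mul_eq_zero.1 h').resolve_left h2
    have hd := sl2_det z
    rw [z01, ← z00] at hd
    rcases mul_eq_zero.1 (show (z 0 0 - 1) * (z 0 0 + 1) = 0 by linear_combination hd) with h | h
    · refine (hz1 (sl2_ext ?_ ?_ ?_ ?_)).elim
      · rw [one_00]; linear_combination h
      · rw [one_01, z01]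
      · rw [one_10, z10]
      · rw [one_11, ← z00]; linear_combination h
    · refine sl2_ext ?_ ?_ ?_ ?_
      · rw [neg_ij, one_00]; linear_combination h
      · rw [neg_ij, one_01, z01, neg_zero]
      · rw [neg_ij, one_10, z10, neg_zero]
      · rw [neg_ij, one_11, ← z00]; linear_combination h
  rcases dickson F₀ p h20 l hl0 hgen G h1G hvG with htop | ⟨rfl, h120, hl2⟩
  · refine ⟨Or.inl ⟨e.trans ((MulEquiv.subgroupCongr htop).trans Subgroup.topEquiv)⟩, ?_, ?_, hfacts⟩
    · refine exists_subgroup_of_hom (φ.comp (SpecialLinearGroup.map c)) (hφinj.comp hc) H ?_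
      rw [hHG, htop]
      rintro _ ⟨g, rfl⟩
      exact ⟨_, trivial, rfl⟩
    · rw [hneg, hHG, htop]
      exact ⟨-1, trivial, hφneg⟩
  · refine ⟨Or.inr ⟨card_eq_nine F₀ l hl2 hgen, G, ⟨e⟩, exceptional_image l hl2 G hG h120⟩, ?_, ?_,
      hfacts⟩
    · -- conjugation by `uu l` moves the standard `SL₂(F₃)` into the group
      let ψ := (MulAut.conj (uu l)).toMonoidHom.comp (SpecialLinearGroup.map (n := Fin 2) c)
      have hψ : ψ.range ≤ G := by
        rw [MonoidHom.range_eq_map, ← sl_zmod_generated, MonoidHom.map_closure, Set.image_pair,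
          Subgroup.closure_le]
        have hc1 : c 1 = 1 := map_one c
        rintro _ (rfl | rfl)
        · change uu l * SpecialLinearGroup.map c (uu 1) * (uu l)⁻¹ ∈ G
          rw [map_uu, hc1, ← uu_add, ← uu_neg, ← uu_add, add_neg_cancel_comm]
          exact h1G
        · change uu l * SpecialLinearGroup.map c (vv 1) * (uu l)⁻¹ ∈ G
          rw [map_vv, hc1]
          exact exc_conj G h1G l hvG hl2
      refine exists_subgroup_of_hom (φ.comp ψ)
        (hφinj.comp ((MulAut.conj (uu l)).injective.comp hc)) H ?_
      rw [hHG]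
      rintro _ ⟨g, rfl⟩
      exact ⟨ψ g, hψ ⟨g, rfl⟩, rfl⟩
    · have h3 : (3 : F₀) = 0 := by exact_mod_cast CharP.cast_eq_zero F₀ 3
      rw [hneg, hHG]
      exact ⟨-1, neg_one_mem_exc G h1G l hvG h3 hl2, hφneg⟩
end

section
/- Let q = p^f with p prime, let V be an n-dimensional vector space over F_{q^2} with n ≥ 5 odd, equipped with a nondegenerate hermitian form h (h is linear in the first argument, h(u,v) = h(v,u)^q, and h(v,V) = 0 implies v = 0), and let SU(V) be the group of linear maps of determinant 1 preserving h. Let x ∈ SU(V) have order p. Then one of the following holds: (1) x stabilizes a nondegenerate one-dimensional subspace of V (a subspace ⟨v⟩ with h(v,v) ≠ 0 and vx ∈ ⟨v⟩); (2) x stabilizes some totally isotropic subspace of V of the maximal dimension (n−1)/2 and induces a non-identity transformation on it; (3) q is odd and there exists g ∈ SU(V) such that the subgroup ⟨x, g⁻¹xg⟩ contains an involution that stabilizes a totally isotropic subspace of dimension (n−1)/2 and induces a non-scalar transformation on it. -/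
/-!
Write `x = 1 + N`, a unipotent isometry. Suppose the first two alternatives fail. Then the fixed
space `K = ker N` is totally isotropic (`isotropic_of_self`). Every invariant totally isotropic
subspace extends to an invariant one of the maximal dimension `m = (n - 1) / 2`
(`exists_isotropic_extension`), on which `x` must be trivial, so `dim K = m`. Counting dimensions,
`im N = Kᗮ` has dimension `m + 1`, whence `N³ = 0` and `N²` has rank one (`jordan_structure`). In
particular `p` is odd, since `p = 2` would force `N² = 0`.

The logarithm `A = N - N² / 2` of `x` is skew-adjoint with `A³ = 0`. The vectors `f, A f, A² f` with
`A² f ≠ 0` span a nondegenerate Jordan block of size `3`. On its orthogonal complement `S` one has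
`A² = 0`, and `h(v, A w)` is a skew-hermitian form on `S / ker A`. An isotropic vector of this form
would produce an invariant totally isotropic plane on which `x` is nontrivial, so the form is
anisotropic, and over a finite field this leaves only one further block, of size `2`. Thus `n = 5`
and `x` is of type `J₃ ⊥ J₂` in a standard basis (`exists_normal_form`).

Up to scaling, `J₃ ⊥ J₂` is the image of an upper unitriangular element of `SL₂` acting on
`Sym² ⊕` natural. The Weyl element `w` acts as an element `g` of the special unitary group, and
in `SL₂` one has `w = u (w⁻¹ u w) u`. Hence `g² ∈ ⟨x, g⁻¹ x g⟩`; this is the image of `-1`, an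
involution equal to `1` on the block of size `3` and to `-1` on the block of size `2`
(`involution_of_normal_form`).
-/

/-- The special unitary group of a hermitian form `h` on `V`: the invertible linear maps of
determinant `1` preserving `h`, as a subgroup of `GL(V) = (V ≃ₗ[F] V)`. -/
noncomputable def specialUnitaryGroupOf {F V : Type} [Field F] [AddCommGroup V] [Module F V]
    (h : V → V → F) : Subgroup (V ≃ₗ[F] V) where
  carrier := {g | LinearEquiv.det g = 1 ∧ ∀ u v : V, h (g u) (g v) = h u v}
  one_mem' := ⟨map_one _, fun _ _ => rfl⟩
  mul_mem' := by
    rintro a b ⟨hda, hha⟩ ⟨hdb, hhb⟩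
    refine ⟨by rw [map_mul, hda, hdb, one_mul], fun u v => ?_⟩
    show h (a (b u)) (a (b v)) = h u v
    rw [hha, hhb]
  inv_mem' := by
    rintro a ⟨hda, hha⟩
    refine ⟨by rw [map_inv, hda, inv_one], fun u v => ?_⟩
    show h (a.symm u) (a.symm v) = h u v
    conv_rhs => rw [← a.apply_symm_apply u, ← a.apply_symm_apply v, hha]

namespace UnitaryStab

open Module

/-! ### Norm and trace of a quadratic extension of finite fields -/

theorem exists_norm_eq {F : Type} [Field F] [Fintype F] {q : ℕ} (hq : 2 ≤ q)
    (hF : Fintype.card F = q ^ 2) (a : F) (ha : a ^ q = a) : ∃ t : F, t * t ^ q = a := by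
  classical
  by_cases h0 : a = 0
  · exact ⟨0, by simp [h0]⟩
  obtain ⟨g, hg⟩ := IsCyclic.exists_generator (α := Fˣ)
  obtain ⟨k, hk⟩ := (Submonoid.mem_powers_iff _ _).1 (mem_powers_iff_mem_zpowers.2 (hg (Units.mk0 a h0)))
  obtain ⟨r, rfl⟩ : ∃ r, q = r + 1 := ⟨q - 1, by omega⟩
  have hord : orderOf g = r * (r + 2) := by
    rw [orderOf_eq_card_of_forall_mem_zpowers hg, Nat.card_eq_fintype_card, Fintype.card_units, hF]
    have : (r + 1) ^ 2 = r * (r + 2) + 1 := by ring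
    omega
  have har : Units.mk0 a h0 ^ r = 1 := by
    ext
    rw [pow_succ] at ha
    have : a ^ r * a = 1 * a := by rw [ha, one_mul]
    simpa using mul_right_cancel₀ h0 this
  rw [← hk, ← pow_mul] at har
  have hdvd := orderOf_dvd_of_pow_eq_one har
  rw [hord, mul_comm k] at hdvd
  -- the exponent of `a` with respect to a generator is divisible by `q + 1`
  obtain ⟨j, rfl⟩ := Nat.dvd_of_mul_dvd_mul_left (by omega) hdvd
  refine ⟨((g ^ j : Fˣ) : F), ?_⟩
  have h := congrArg Units.val hk
  simp only [Units.val_pow_eq_pow_val, Units.val_mk0] at h ⊢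
  rw [← h]
  ring

theorem exists_trace_ne_zero {F : Type} [Field F] [Fintype F] {q : ℕ} (hq : 2 ≤ q)
    (hF : Fintype.card F = q ^ 2) : ∃ c : F, c + c ^ q ≠ 0 := by
  classical
  by_contra! hall
  open Polynomial in
  have hd : (X ^ q + X : F[X]).natDegree = q := by
    compute_degree!
    · rw [if_neg (by omega)]; simp
    · omega
  have hne : (Polynomial.X ^ q + Polynomial.X : Polynomial F) ≠ 0 := by
    intro h0
    rw [h0, Polynomial.natDegree_zero] at hd
    omega
  have h1 := Polynomial.card_le_degree_of_subset_roots
    (p := (Polynomial.X ^ q + Polynomial.X : Polynomial F)) (Z := Finset.univ) (by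
      intro c _
      rw [Polynomial.mem_roots hne]
      simpa [Polynomial.IsRoot, add_comm] using hall c)
  rw [hd, Finset.card_univ, hF] at h1
  nlinarith

/-! ### Orthogonal complements and isotropic subspaces -/

variable {F V : Type} [Field F] [AddCommGroup V] [Module F V] {σ : F →+* F}

def perp (B : V →ₗ[F] V →ₛₗ[σ] F) (U : Submodule F V) : Submodule F V where
  carrier := {v | ∀ u ∈ U, B v u = 0}
  add_mem' := fun ha hb u hu => by simp [ha u hu, hb u hu]
  zero_mem' := fun u _ => by simp
  smul_mem' := fun c v hv u hu => by simp [hv u hu]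

theorem mem_perp {B : V →ₗ[F] V →ₛₗ[σ] F} {U : Submodule F V} {v : V} :
    v ∈ perp B U ↔ ∀ u ∈ U, B v u = 0 := Iff.rfl

theorem finrank_perp [FiniteDimensional F V] (B : V →ₗ[F] V →ₛₗ[σ] F)
    (hs : ∀ u v, σ (B v u) = B u v) (hσ : ∀ c, σ (σ c) = c)
    (nd : ∀ v, (∀ u, B v u = 0) → v = 0) (U : Submodule F V) :
    finrank F (perp B U) + finrank F U = finrank F V := by
  classical
  let b := finBasis F U
  let L : V →ₗ[F] (Fin (finrank F U) → F) :=
    { toFun := fun v i => B v (b i)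
      map_add' := fun u v => by ext i; simp
      map_smul' := fun c v => by ext i; simp }
  have hker : LinearMap.ker L = perp B U := by
    ext v
    rw [LinearMap.mem_ker, mem_perp]
    constructor
    · intro hv u hu
      have hb : ∀ i, B v (b i) = 0 := fun i => congrFun hv i
      have h1 := b.sum_repr ⟨u, hu⟩
      have h2 : u = ∑ i, (b.repr ⟨u, hu⟩ i) • (b i : V) := by
        have := congrArg U.subtype h1
        rw [map_sum] at this
        exact this.symm
      rw [h2]
      simp [hb]
    · intro hv
      ext i
      exact hv _ (b i).2
  have hsurj : LinearMap.range L = ⊤ := by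
    by_contra hne
    obtain ⟨φ, hφ, hle⟩ := Submodule.exists_le_ker_of_lt_top _ (lt_top_iff_ne_top.2 hne)
    -- the functional `φ` annihilating the range corresponds to a vector of `U` orthogonal to `V`
    let a : Fin (finrank F U) → F := fun i => φ (Pi.single i 1)
    have hφa : ∀ w, φ w = ∑ i, w i * a i := by
      intro w
      conv_lhs => rw [← Finset.univ_sum_single w]
      rw [map_sum]
      refine Finset.sum_congr rfl fun i _ => ?_
      have : Pi.single i (w i) = w i • (Pi.single i (1 : F) : Fin (finrank F U) → F) := by
        ext j
        by_cases hj : j = i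
        · subst hj; simp
        · simp [hj]
      rw [this, map_smul, smul_eq_mul]
    have hz : ∑ i, σ (a i) • (b i : V) = 0 := by
      apply nd
      intro u
      rw [← hs]
      have : B u (∑ i, σ (a i) • (b i : V)) = 0 := by
        have h0 : φ (L u) = 0 := hle ⟨u, rfl⟩
        rw [hφa] at h0
        rw [map_sum, ← h0]
        refine Finset.sum_congr rfl fun i _ => ?_
        rw [map_smulₛₗ, hσ, smul_eq_mul, mul_comm]
        rfl
      rw [this, map_zero]
    have hz' : ∑ i, σ (a i) • b i = 0 := by
      apply Subtype.ext
      simpa using hz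
    have hl := Fintype.linearIndependent_iff.1 b.linearIndependent _ hz'
    apply hφ
    ext i
    have h3 : a i = 0 := by rw [← hσ (a i), hl i, map_zero]
    simpa [a] using h3
  have := LinearMap.finrank_range_add_finrank_ker L
  rw [hker, hsurj, finrank_top, finrank_fin_fun] at this
  omega

theorem symm_mem_of_invariant [FiniteDimensional F V] (x : V ≃ₗ[F] V) (U : Submodule F V)
    (hU : ∀ u ∈ U, x u ∈ U) : ∀ u ∈ U, x.symm u ∈ U := by
  have h1 : U.map (x : V →ₗ[F] V) ≤ U := by
    rintro _ ⟨u, hu, rfl⟩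
    exact hU u hu
  have h2 : U.map (x : V →ₗ[F] V) = U :=
    Submodule.eq_of_le_of_finrank_eq h1 (LinearEquiv.finrank_map_eq x U)
  intro u hu
  rw [← h2] at hu
  obtain ⟨w, hw, rfl⟩ := hu
  simpa using hw

/-- A nilpotent operator on `M` has a nonzero vector in its kernel modulo `U`. -/
theorem exists_fixed_mod (N : End F V) (hN : IsNilpotent N) (U M : Submodule F V)
    (hUM : ¬ M ≤ U) (hM : ∀ m ∈ M, N m ∈ M) : ∃ v ∈ M, v ∉ U ∧ N v ∈ U := by
  classical
  obtain ⟨v, hvM, hvU⟩ := SetLike.not_le_iff_exists.1 hUM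
  obtain ⟨k, hk⟩ := hN
  have hex : ∃ k, (N ^ k) v ∈ U := ⟨k, by simp [hk]⟩
  have hmem : ∀ k, (N ^ k) v ∈ M := by
    intro k
    induction k with
    | zero => simpa using hvM
    | succ k ih => rw [pow_succ']; exact hM _ ih
  have hspec := Nat.find_spec hex
  have hmin := fun m => Nat.find_min (m := m) hex
  cases hk : Nat.find hex with
  | zero => rw [hk] at hspec; exact absurd (by simpa using hspec) hvU
  | succ j =>
    refine ⟨(N ^ j) v, hmem j, hmin j (by omega), ?_⟩
    rw [hk, pow_succ'] at hspec
    exact hspec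

theorem isotropic_sup_span {B : V →ₗ[F] V →ₛₗ[σ] F} (hs : ∀ u v, σ (B v u) = B u v)
    {U : Submodule F V} (hU : ∀ u ∈ U, ∀ w ∈ U, B u w = 0) {v : V} (hv : v ∈ perp B U)
    (hvv : B v v = 0) :
    ∀ u ∈ U ⊔ Submodule.span F {v}, ∀ w ∈ U ⊔ Submodule.span F {v}, B u w = 0 := by
  intro u hu w hw
  obtain ⟨a, ha, b, hb, rfl⟩ := Submodule.mem_sup.1 hu
  obtain ⟨c, hc, d, hd, rfl⟩ := Submodule.mem_sup.1 hw
  obtain ⟨s, rfl⟩ := Submodule.mem_span_singleton.1 hb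
  obtain ⟨t, rfl⟩ := Submodule.mem_span_singleton.1 hd
  have h1 := hU a ha c hc
  have h2 := hv c hc
  have h3 : B a v = 0 := by rw [← hs, hv a ha, map_zero]
  simp [h1, h2, h3, hvv]

theorem finrank_lt_sup_span [FiniteDimensional F V] {U : Submodule F V} {v : V} (hv : v ∉ U) :
    finrank F U < finrank F ↥(U ⊔ Submodule.span F {v}) := by
  apply Submodule.finrank_lt_finrank_of_lt
  refine lt_of_le_of_ne le_sup_left fun h => hv ?_
  rw [h]
  exact Submodule.mem_sup_right (Submodule.mem_span_singleton_self v)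

theorem two_mul_finrank_isotropic_le [FiniteDimensional F V] (B : V →ₗ[F] V →ₛₗ[σ] F)
    (hs : ∀ u v, σ (B v u) = B u v) (hσ : ∀ c, σ (σ c) = c)
    (nd : ∀ v, (∀ u, B v u = 0) → v = 0) {U : Submodule F V}
    (hU : ∀ u ∈ U, ∀ w ∈ U, B u w = 0) : 2 * finrank F U ≤ finrank F V := by
  have h1 := finrank_perp B hs hσ nd U
  have h2 : finrank F U ≤ finrank F (perp B U) :=
    Submodule.finrank_mono fun u hu w hw => hU u hu w hw
  omega

/-- A totally isotropic subspace invariant under a unipotent isometry lies in an invariant totally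
isotropic subspace of the maximal dimension. The reason is that a unipotent isometry of
`Uᗮ / U`, of dimension at least two, fixes a nonzero isotropic vector: otherwise it fixes an
anisotropic `v₁`, then an anisotropic `v₂` orthogonal to it, and some `v₁ + t v₂` is isotropic
because the norm is surjective. -/
theorem exists_isotropic_extension [FiniteDimensional F V] (B : V →ₗ[F] V →ₛₗ[σ] F)
    (hs : ∀ u v, σ (B v u) = B u v) (hσ : ∀ c, σ (σ c) = c)
    (nd : ∀ v, (∀ u, B v u = 0) → v = 0)
    (hnorm : ∀ a, σ a = a → ∃ t, t * σ t = a)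
    (x : V ≃ₗ[F] V) (hx : ∀ u v, B (x u) (x v) = B u v)
    (hN : IsNilpotent ((x : V →ₗ[F] V) - 1 : End F V)) :
    ∀ (k : ℕ) (U : Submodule F V), finrank F V - finrank F U = k →
      (∀ u ∈ U, ∀ w ∈ U, B u w = 0) → (∀ u ∈ U, x u ∈ U) →
      ∃ W : Submodule F V, U ≤ W ∧ (∀ u ∈ W, ∀ w ∈ W, B u w = 0) ∧ (∀ u ∈ W, x u ∈ W) ∧
        finrank F V ≤ 2 * finrank F W + 1 := by
  intro k
  induction k using Nat.strong_induction_on with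
  | _ k ih =>
  intro U hk hU hxU
  by_cases hbig : finrank F V ≤ 2 * finrank F U + 1
  · exact ⟨U, le_rfl, hU, hxU, hbig⟩
  have hadj : ∀ u v, B (x u) v = B u (x.symm v) := fun u v => by
    rw [← hx u, x.apply_symm_apply]
  have hNx : ∀ v, ((x : V →ₗ[F] V) - 1 : End F V) v = x v - v := fun v => rfl
  have hsU := symm_mem_of_invariant x U hxU
  have hdim := finrank_perp B hs hσ nd U
  have hUM : U ≤ perp B U := fun u hu w hw => hU u hu w hw
  have hxM : ∀ m ∈ perp B U, x m ∈ perp B U := fun m hm u hu => by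
    rw [hadj]; exact hm _ (hsU u hu)
  -- a new isotropic vector of `perp B U`, fixed modulo `U`, gives a strictly larger subspace
  suffices hv : ∃ v ∈ perp B U, v ∉ U ∧ x v - v ∈ U ∧ B v v = 0 by
    obtain ⟨v, hvM, hvU, hxv, hvv⟩ := hv
    have hlt := finrank_lt_sup_span hvU
    have hle := Submodule.finrank_le (U ⊔ Submodule.span F {v})
    obtain ⟨W, h1, h2, h3, h4⟩ := ih _ (by omega) (U ⊔ Submodule.span F {v}) rfl
      (isotropic_sup_span hs hU hvM hvv) (by
        intro u hu
        obtain ⟨a, ha, b, hb, rfl⟩ := Submodule.mem_sup.1 hu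
        obtain ⟨s, rfl⟩ := Submodule.mem_span_singleton.1 hb
        have : x (a + s • v) = (x a + s • (x v - v)) + s • v := by
          rw [map_add, map_smul, smul_sub]; abel
        rw [this]
        exact Submodule.add_mem_sup (U.add_mem (hxU a ha) (U.smul_mem s hxv))
          (Submodule.smul_mem _ _ (Submodule.mem_span_singleton_self v)))
    exact ⟨W, le_sup_left.trans h1, h2, h3, h4⟩
  have hnot : ¬ perp B U ≤ U := fun hle => by
    have := Submodule.finrank_mono hle
    omega
  obtain ⟨v₁, hv₁M, hv₁U, hv₁⟩ := exists_fixed_mod _ hN U (perp B U) hnot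
    (fun m hm => by rw [hNx]; exact sub_mem (hxM m hm) hm)
  rw [hNx] at hv₁
  by_cases h1 : B v₁ v₁ = 0
  · exact ⟨v₁, hv₁M, hv₁U, hv₁, h1⟩
  have hsum : finrank F ↥(U ⊔ Submodule.span F {v₁}) ≤ finrank F U + 1 := by
    have := Submodule.finrank_add_le_finrank_add_finrank U (Submodule.span F {v₁})
    have := finrank_span_singleton (K := F) (v := v₁) (fun h => hv₁U (h ▸ U.zero_mem))
    omega
  have hdim' := finrank_perp B hs hσ nd (U ⊔ Submodule.span F {v₁})
  have hnot' : ¬ perp B (U ⊔ Submodule.span F {v₁}) ≤ U := fun hle => by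
    have := Submodule.finrank_mono hle
    omega
  have hsv : x.symm v₁ - v₁ ∈ U := by
    have := U.neg_mem (hsU _ hv₁)
    simpa using this
  have hinv : ∀ u ∈ U ⊔ Submodule.span F {v₁}, x.symm u ∈ U ⊔ Submodule.span F {v₁} := by
    intro u hu
    obtain ⟨a, ha, b, hb, rfl⟩ := Submodule.mem_sup.1 hu
    obtain ⟨s, rfl⟩ := Submodule.mem_span_singleton.1 hb
    have : x.symm (a + s • v₁) = (x.symm a + s • (x.symm v₁ - v₁)) + s • v₁ := by
      rw [map_add, map_smul, smul_sub]; abel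
    rw [this]
    exact Submodule.add_mem_sup (U.add_mem (hsU a ha) (U.smul_mem s hsv))
      (Submodule.smul_mem _ _ (Submodule.mem_span_singleton_self v₁))
  obtain ⟨v₂, hv₂M, hv₂U, hv₂⟩ := exists_fixed_mod _ hN U _ hnot'
    (fun m hm => by
      rw [hNx]
      refine sub_mem (fun u hu => ?_) hm
      rw [hadj]; exact hm _ (hinv u hu))
  rw [hNx] at hv₂
  have hv₂M' : v₂ ∈ perp B U := fun u hu => hv₂M u (Submodule.mem_sup_left hu)
  by_cases h2 : B v₂ v₂ = 0
  · exact ⟨v₂, hv₂M', hv₂U, hv₂, h2⟩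
  have h21 : B v₂ v₁ = 0 :=
    hv₂M v₁ (Submodule.mem_sup_right (Submodule.mem_span_singleton_self v₁))
  have h12 : B v₁ v₂ = 0 := by rw [← hs, h21, map_zero]
  obtain ⟨t, ht⟩ := hnorm (-(B v₁ v₁ / B v₂ v₂)) (by rw [map_neg, map_div₀, hs, hs])
  refine ⟨v₁ + t • v₂, add_mem hv₁M (Submodule.smul_mem _ _ hv₂M'), fun hmem => ?_, ?_, ?_⟩
  · have := hUM hmem
    have h3 : B v₁ (v₁ + t • v₂) = 0 := hv₁M _ hmem
    simp [h12] at h3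
    exact h1 h3
  · have : x (v₁ + t • v₂) - (v₁ + t • v₂) = (x v₁ - v₁) + t • (x v₂ - v₂) := by
      rw [map_add, map_smul, smul_sub]; abel
    rw [this]
    exact add_mem hv₁ (U.smul_mem t hv₂)
  · have h4 : B (v₁ + t • v₂) (v₁ + t • v₂) = B v₁ v₁ + t * σ t * B v₂ v₂ := by
      simp [h12, h21]; ring
    rw [h4, ht]
    field_simp
    ring

theorem isotropic_of_self [FiniteDimensional F V] {B : V →ₗ[F] V →ₛₗ[σ] F}
    (hs : ∀ u v, σ (B v u) = B u v) (htr : ∃ c, c + σ c ≠ 0) {K : Submodule F V}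
    (hK : ∀ v ∈ K, B v v = 0) : ∀ u ∈ K, ∀ v ∈ K, B u v = 0 := by
  intro u hu v hv
  by_contra hne
  obtain ⟨c, hc⟩ := htr
  have h1 := hK (((c / B u v)) • u + v) (K.add_mem (K.smul_mem _ hu) hv)
  have h2 : B v u = σ (B u v) := (hs _ _).symm
  simp only [map_add, LinearMap.add_apply, map_smul, LinearMap.smul_apply, map_smulₛₗ, hK u hu,
    hK v hv, smul_eq_mul, h2, mul_zero, zero_add, add_zero] at h1
  have h3 : σ (B u v) ≠ 0 := by simpa using hne
  apply hc
  rw [← h1, map_div₀]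
  field_simp
  ring

/-! ### Jordan structure of the isometry -/

/-- If every invariant totally isotropic subspace consists of fixed vectors and extends to one of
the maximal dimension `m`, then the fixed space `K = ker N` has dimension `m` and is totally
isotropic, `im N = Kᗮ`, and `x` acts trivially on the line `Kᗮ / K`. Hence `N³ = 0` and `N²` has
rank one: `x` has exactly one Jordan block of size `3`, and all others are smaller. -/
theorem jordan_structure [FiniteDimensional F V] (B : V →ₗ[F] V →ₛₗ[σ] F)
    (hs : ∀ u v, σ (B v u) = B u v) (hσ : ∀ c, σ (σ c) = c)
    (nd : ∀ v, (∀ u, B v u = 0) → v = 0)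
    (x : V ≃ₗ[F] V) (hx : ∀ u v, B (x u) (x v) = B u v)
    (N : End F V) (hNx : ∀ v, N v = x v - v) (hN : IsNilpotent N)
    (m : ℕ) (hdim : finrank F V = 2 * m + 1)
    (hK : ∀ v w, N v = 0 → N w = 0 → B v w = 0)
    (hext : ∀ U : Submodule F V, (∀ u ∈ U, ∀ w ∈ U, B u w = 0) → (∀ u ∈ U, x u ∈ U) →
      ∃ W : Submodule F V, U ≤ W ∧ (∀ u ∈ W, N u = 0) ∧ m ≤ finrank F W) :
    ∃ f, N (N f) ≠ 0 ∧ (∀ v, N (N (N v)) = 0) ∧ ∀ v, ∃ c : F, N (N v) = c • N (N f) := by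
  set K := LinearMap.ker N with hKd
  have hKiso : ∀ u ∈ K, ∀ w ∈ K, B u w = 0 := fun u hu w hw => hK u w hu hw
  have hKle := two_mul_finrank_isotropic_le B hs hσ nd hKiso
  obtain ⟨W, -, hW, hmW⟩ := hext ⊥ (by simp) (by simp)
  have hKm : finrank F K = m := by
    have : finrank F W ≤ finrank F K := Submodule.finrank_mono fun u hu => hW u hu
    omega
  have hperp := finrank_perp B hs hσ nd K
  have hrange : LinearMap.range N = perp B K := by
    apply Submodule.eq_of_le_of_finrank_eq
    · rintro _ ⟨v, rfl⟩ k hk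
      have hk' : x k = k := by
        have : N k = 0 := hk
        rwa [hNx, sub_eq_zero] at this
      rw [hNx, map_sub, LinearMap.sub_apply]
      nth_rw 1 [← hk']
      rw [hx, sub_self]
    · have := LinearMap.finrank_range_add_finrank_ker N
      rw [← hKd] at this
      omega
  have hnot : ¬ perp B K ≤ K := fun hle => by
    have := Submodule.finrank_mono hle
    omega
  obtain ⟨v, hvM, hvK, hNv⟩ := exists_fixed_mod N hN K (perp B K) hnot
    (fun m _ => by rw [← hrange]; exact ⟨m, rfl⟩)
  -- `perp B K` is spanned by `K` and `v`
  have hspan : perp B K = K ⊔ Submodule.span F {v} := by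
    symm
    apply Submodule.eq_of_le_of_finrank_le
    · refine sup_le (fun u hu w hw => hKiso u hu w hw) ?_
      rwa [Submodule.span_singleton_le_iff_mem]
    · have := finrank_lt_sup_span hvK
      omega
  have hN2 : ∀ u, ∃ c : F, N (N u) = c • N v := by
    intro u
    have hu : N u ∈ perp B K := by rw [← hrange]; exact ⟨u, rfl⟩
    rw [hspan] at hu
    obtain ⟨a, ha, b, hb, hab⟩ := Submodule.mem_sup.1 hu
    obtain ⟨c, rfl⟩ := Submodule.mem_span_singleton.1 hb
    have ha' : N a = 0 := ha
    exact ⟨c, by rw [← hab, map_add, ha', zero_add, map_smul]⟩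
  obtain ⟨f, hf⟩ : ∃ f, N f = v := by
    have := hvM
    rwa [← hrange] at this
  refine ⟨f, ?_, fun u => ?_, fun u => ?_⟩
  · rw [hf]; exact hvK
  · obtain ⟨c, hc⟩ := hN2 u
    have : N (N v) = 0 := hNv
    rw [hc, map_smul, this, smul_zero]
  · rw [hf]; exact hN2 u

/-- Let `A` be a skew-adjoint operator with `A³ = 0` and `A²` of rank one, and suppose that `ker A`
is totally isotropic and that no `v` with `A v ≠ 0` and `A² v = 0` spans with `A v` a totally
isotropic plane. Then `V` has dimension `5`, and is the orthogonal sum of a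
Jordan block `f₁, A f₁, A² f₁` of size `3` and a Jordan block `e₂, A e₂` of size `2`, with
antidiagonal Gram matrices. Writing `S` for the orthogonal complement of the first block, the
form `h(v, A w)` on `S / ker A` is anisotropic skew-hermitian, so that quotient has dimension at
most one. -/
theorem exists_normal_form [FiniteDimensional F V] (B : V →ₗ[F] V →ₛₗ[σ] F)
    (hs : ∀ u v, σ (B v u) = B u v)
    (nd : ∀ v, (∀ u, B v u = 0) → v = 0)
    (hnorm : ∀ a, σ a = a → ∃ t, t * σ t = a) (h2 : (2 : F) ≠ 0)
    (hdim : 5 ≤ finrank F V) (A : V →ₗ[F] V) (hA : ∀ u v, B (A u) v = - B u (A v))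
    (f : V) (hf : A (A f) ≠ 0) (hA3 : ∀ v, A (A (A v)) = 0)
    (hr : ∀ v, ∃ c : F, A (A v) = c • A (A f))
    (hK : ∀ v w, A v = 0 → A w = 0 → B v w = 0)
    (hiso : ∀ v, A v ≠ 0 → A (A v) = 0 → B v v = 0 → B v (A v) ≠ 0) :
    finrank F V = 5 ∧ ∃ f₁ e₂ : V, B f₁ f₁ = 0 ∧ B f₁ (A f₁) = 0 ∧ B f₁ (A (A f₁)) ≠ 0 ∧
      A (A e₂) = 0 ∧ B e₂ e₂ = 0 ∧ B e₂ (A e₂) ≠ 0 ∧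
      B e₂ f₁ = 0 ∧ B e₂ (A f₁) = 0 ∧ B e₂ (A (A f₁)) = 0 := by
  have σ2 : σ 2 = 2 := map_ofNat σ 2
  have s0 : ∀ {u v}, B u v = 0 → B v u = 0 := fun {u v} h => by rw [← hs, h, map_zero]
  have hA' : ∀ u v, B u (A v) = - B (A u) v := fun u v => by rw [hA, neg_neg]
  -- `h(f, A² f) ≠ 0`, because `A² f` spans the image of the self-adjoint map `A²`
  have hγ : B f (A (A f)) ≠ 0 := by
    intro h0
    apply hf
    apply nd
    intro u
    obtain ⟨c, hc⟩ := hr u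
    rw [hA, hA, neg_neg, hc, map_smulₛₗ, h0, smul_zero]
  obtain ⟨f₁, h11, h12, h13, hr₁⟩ : ∃ f₁, B f₁ f₁ = 0 ∧ B f₁ (A f₁) = 0 ∧ B f₁ (A (A f₁)) ≠ 0 ∧
      ∀ v, ∃ c : F, A (A v) = c • A (A f₁) := by
    set γ := B f (A (A f)) with hγd
    set δ := B f (A f) with hδd
    have hγs : σ γ = γ := by rw [hγd, hs, hA, hA, neg_neg]
    have hδs : σ δ = -δ := by rw [hδd, hs, hA]
    have e31 : B (A (A f)) f = γ := by rw [hA, hA, neg_neg]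
    have e22 : B (A f) (A f) = -γ := by rw [hA]
    have e21 : B (A f) f = -δ := by rw [hA]
    have e23 : B (A f) (A (A f)) = 0 := by rw [hA, hA3, map_zero, neg_zero]
    have e32 : B (A (A f)) (A f) = 0 := s0 e23
    have e33 : B (A (A f)) (A (A f)) = 0 := by rw [hA, hA3, map_zero, neg_zero]
    -- first make `h(f, A f)` vanish
    set c := δ / (2 * γ) with hcd
    have hcs : σ c = -c := by rw [hcd, map_div₀, map_mul, σ2, hγs, hδs, neg_div]
    set g := f + c • A f with hgd
    have g1 : A g = A f + c • A (A f) := by rw [hgd, map_add, map_smul]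
    have g2 : A (A g) = A (A f) := by rw [g1, map_add, map_smul, hA3, smul_zero, add_zero]
    have g12 : B g (A g) = 0 := by
      rw [g1, hgd]
      simp only [map_add, LinearMap.add_apply, map_smul, LinearMap.smul_apply, map_smulₛₗ,
        smul_eq_mul, e22, e23, ← hγd, ← hδd, hcs]
      rw [hcd]; field_simp; ring
    have g13 : B g (A (A f)) = γ := by
      rw [hgd]; simp [e23, hγd]
    have g32 : B (A (A f)) (A g) = 0 := by rw [g1]; simp [e32, e33]
    have g31 : B (A (A f)) g = γ := by rw [← hs, g13, hγs]
    -- then make `h(f, f)` vanish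
    set d := -(B g g / (2 * γ)) with hdd
    have hds : σ d = d := by rw [hdd, map_neg, map_div₀, map_mul, σ2, hγs, hs]
    have k1 : A (g + d • A (A f)) = A g := by rw [map_add, map_smul, hA3, smul_zero, add_zero]
    refine ⟨g + d • A (A f), ?_, ?_, ?_, ?_⟩
    · simp only [map_add, LinearMap.add_apply, map_smul, LinearMap.smul_apply, map_smulₛₗ,
        smul_eq_mul, g13, g31, e33, hds]
      rw [hdd]; field_simp; ring
    · rw [k1]; simp [g12, g32]
    · rw [k1, g2]; simpa [g13, e33] using hγ
    · rw [k1, g2]; exact hr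
  clear hr hγ hf f
  set γ := B f₁ (A (A f₁)) with hγd
  have hγs : σ γ = γ := by rw [hγd, hs, hA, hA, neg_neg]
  have e31 : B (A (A f₁)) f₁ = γ := by rw [hA, hA, neg_neg]
  have e22 : B (A f₁) (A f₁) = -γ := by rw [hA]
  have e21 : B (A f₁) f₁ = 0 := s0 h12
  have e23 : B (A f₁) (A (A f₁)) = 0 := by rw [hA, hA3, map_zero, neg_zero]
  have e32 : B (A (A f₁)) (A f₁) = 0 := s0 e23
  have e33 : B (A (A f₁)) (A (A f₁)) = 0 := by rw [hA, hA3, map_zero, neg_zero]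
  let S : V → Prop := fun v => B v f₁ = 0 ∧ B v (A f₁) = 0 ∧ B v (A (A f₁)) = 0
  have SA : ∀ v, S v → S (A v) := fun v hv => by
    refine ⟨?_, ?_, ?_⟩
    · rw [hA, hv.2.1, neg_zero]
    · rw [hA, hv.2.2, neg_zero]
    · rw [hA, hA3, map_zero, neg_zero]
  have SA2 : ∀ v, S v → A (A v) = 0 := fun v hv => by
    obtain ⟨c, hc⟩ := hr₁ v
    have h0 := (SA _ (SA v hv)).1
    rw [hc, map_smul, LinearMap.smul_apply, e31, smul_eq_mul] at h0
    rw [hc, (mul_eq_zero.1 h0).resolve_right h13, zero_smul]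
  -- orthogonal projection onto `S`
  have proj : ∀ u, ∃ u', S u' ∧ ∀ v, S v → B v u' = B v u := by
    intro u
    refine ⟨u - (B u (A (A f₁)) / γ) • f₁ + (B u (A f₁) / γ) • A f₁ - (B u f₁ / γ) • A (A f₁),
      ⟨?_, ?_, ?_⟩, fun v hv => ?_⟩
    · simp [h11, e21, e31, h13]
    · simp [h12, e22, e32, h13]
    · simp [← hγd, e23, e33, h13]
    · simp [hv.1, hv.2.1, hv.2.2]
  have ndS : ∀ v, S v → (∀ u, S u → B v u = 0) → v = 0 := fun v hv h0 => by
    apply nd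
    intro u
    obtain ⟨u', hSu, hu⟩ := proj u
    rw [← hu v hv, h0 u' hSu]
  -- on `S`, the skew-hermitian form `h(v, A w)` has no isotropic vectors outside `ker A`
  have aniso : ∀ v, S v → A v ≠ 0 → B v (A v) ≠ 0 := by
    intro v hv hAv h0
    obtain ⟨u, hu, hne⟩ : ∃ u, S u ∧ B (A v) u ≠ 0 := by
      by_contra! hcon
      exact hAv (ndS _ (SA v hv) hcon)
    have hAu : B (A u) v ≠ 0 := by
      rw [hA, ← hs]; simpa using hne
    -- translate `v` by a multiple of `A u` to make it isotropic
    set c := -(B v v / (2 * B (A u) v)) with hcd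
    have a1 : A (v + c • A u) = A v := by rw [map_add, map_smul, SA2 u hu, smul_zero, add_zero]
    have a2 : B (A u) (A v) = 0 := by rw [hA, SA2 v hv, map_zero, neg_zero]
    have a3 : B (A u) (A u) = 0 := by rw [hA, SA2 u hu, map_zero, neg_zero]
    have a4 : c * B (A u) v = -(B v v / 2) := by rw [hcd]; field_simp
    refine hiso (v + c • A u) (by rwa [a1]) (by rw [a1, SA2 v hv]) ?_ ?_
    · have a5 : σ c * B v (A u) = -(B v v / 2) := by
        rw [← hs v (A u), ← map_mul, a4, map_neg, map_div₀, hs, σ2]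
      have : B (v + c • A u) (v + c • A u) = B v v + c * B (A u) v + σ c * B v (A u) := by
        simp [a3]; ring
      rw [this, a4, a5]; field_simp; ring
    · rw [a1]; simp [h0, a2]
  have hdimle : ∀ k (φ : Fin k → V), k < finrank F V → ∃ v, v ≠ 0 ∧ ∀ i, B v (φ i) = 0 := by
    intro k φ hk
    let L : V →ₗ[F] (Fin k → F) :=
      { toFun := fun v i => B v (φ i)
        map_add' := fun u v => by ext i; simp
        map_smul' := fun c v => by ext i; simp }
    have := LinearMap.ker_ne_bot_of_finrank_lt (f := L) (by rwa [finrank_fin_fun])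
    obtain ⟨v, hv, hv0⟩ := (Submodule.ne_bot_iff _).1 this
    exact ⟨v, hv0, fun i => congrFun hv i⟩
  obtain ⟨e, he, hAe⟩ : ∃ e, S e ∧ A e ≠ 0 := by
    by_contra! hcon
    obtain ⟨v, hv0, hv⟩ := hdimle 3 ![f₁, A f₁, A (A f₁)] (by omega)
    have hv : S v := ⟨hv 0, hv 1, hv 2⟩
    exact hv0 (ndS v hv fun u hu => hK _ _ (hcon v hv) (hcon u hu))
  have hα := aniso e he hAe
  have e11 : B (A e) (A e) = 0 := by rw [hA, SA2 e he, map_zero, neg_zero]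
  have e12 : B (A e) e ≠ 0 := fun h => hα (s0 h)
  have hle : finrank F V ≤ 5 := by
    by_contra hlt
    obtain ⟨v, hv0, hv⟩ := hdimle 5 ![f₁, A f₁, A (A f₁), e, A e] (by omega)
    have hvS : S v := ⟨hv 0, hv 1, hv 2⟩
    -- two independent vectors of `S / ker A` would yield an isotropic combination for `h(v, A w)`
    have hT : ∀ v, S v → B v e = 0 → B v (A e) = 0 → A v = 0 := by
      intro v hv hve hvAe
      by_contra hAv
      have hβ := aniso v hv hAv
      have r1 : B e v = 0 := s0 hve
      have r2 : B e (A v) = 0 := by rw [hA', s0 hvAe, neg_zero]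
      have q1 : ∀ w, σ (B w (A w)) = - B w (A w) := fun w => by rw [hs, hA]
      obtain ⟨t, ht⟩ := hnorm (-(B e (A e) / B v (A v))) (by
        rw [map_neg, map_div₀, q1, q1, neg_div_neg_eq])
      have hSe : S (e + t • v) := by
        refine ⟨?_, ?_, ?_⟩
        · simp [he.1, hv.1]
        · simp [he.2.1, hv.2.1]
        · simp [he.2.2, hv.2.2]
      have h0 : B (e + t • v) (A (e + t • v)) = 0 := by
        have : B (e + t • v) (A (e + t • v)) = B e (A e) + t * σ t * B v (A v) := by
          simp [r2, hvAe]; ring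
        rw [this, ht]; field_simp; ring
      have hA0 : A (e + t • v) = 0 := by
        by_contra hne
        exact aniso _ hSe hne h0
      have h3 : B e (A (e + t • v)) = 0 := by rw [hA0, map_zero]
      simp [r2] at h3
      exact hα h3
    have hv3 : B v e = 0 := hv 3
    have hv4 : B v (A e) = 0 := hv 4
    have hAv := hT v hvS hv3 hv4
    refine hv0 (ndS v hvS fun u hu => ?_)
    -- remove from `u` its component in the span of `e` and `A e`
    have hα' : σ (B e (A e)) ≠ 0 := by simpa using hα
    set d := B u (A e) / B e (A e) with hd
    set c := (B u e - d * B e e) / B (A e) e with hc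
    have hu'S : S (u - d • e - c • A e) := by
      have h' := SA e he
      refine ⟨?_, ?_, ?_⟩
      · simp [hu.1, he.1, h'.1]
      · simp [hu.2.1, he.2.1, h'.2.1]
      · simp [hu.2.2, he.2.2, h'.2.2]
    have hAu' := hT _ hu'S (by simp [hc, e12]) (by simp [hd, e11, hα])
    have h5 := hK _ _ hAv hAu'
    simpa [hv3, hv4] using h5
  refine ⟨le_antisymm hle hdim, f₁, e - (B e e / (2 * B (A e) e)) • A e, h11, h12, h13, ?_⟩
  set c := B e e / (2 * B (A e) e) with hc
  have a1 : A (e - c • A e) = A e := by rw [map_sub, map_smul, SA2 e he, smul_zero, sub_zero]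
  have a4 : c * B (A e) e = B e e / 2 := by rw [hc]; field_simp
  have a5 : σ c * B e (A e) = B e e / 2 := by
    rw [← hs e (A e), ← map_mul, a4, map_div₀, hs, σ2]
  have h' := SA e he
  refine ⟨by rw [a1, SA2 e he], ?_, ?_, ?_, ?_, ?_⟩
  · have : B (e - c • A e) (e - c • A e) = B e e - c * B (A e) e - σ c * B e (A e) := by
      simp [e11]; ring
    rw [this, a4, a5]; field_simp; ring
  · rw [a1]; simpa [e11] using hα
  · simp [he.1, h'.1]
  · simp [he.2.1, h'.2.1]
  · simp [he.2.2, h'.2.2]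

/-! ### The involution in dimension five -/

theorem involution_of_normal_form [FiniteDimensional F V] (B : V →ₗ[F] V →ₛₗ[σ] F)
    (hs : ∀ u v, σ (B v u) = B u v) (h2 : (2 : F) ≠ 0) (hdim : finrank F V = 5)
    (A : V →ₗ[F] V) (hA : ∀ u v, B (A u) v = - B u (A v)) (hA3 : ∀ v, A (A (A v)) = 0)
    (x : V ≃ₗ[F] V) (hxA : ∀ v, x v = v + A v + (1 / 2 : F) • A (A v))
    (f₁ e₂ : V) (h11 : B f₁ f₁ = 0) (h12 : B f₁ (A f₁) = 0) (h13 : B f₁ (A (A f₁)) ≠ 0)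
    (he : A (A e₂) = 0) (k22 : B e₂ e₂ = 0) (k21 : B e₂ (A e₂) ≠ 0)
    (m1 : B e₂ f₁ = 0) (m2 : B e₂ (A f₁) = 0) (m3 : B e₂ (A (A f₁)) = 0) :
    ∃ g ∈ specialUnitaryGroupOf (fun u v => B u v),
      ∃ y ∈ Subgroup.closure {x, g⁻¹ * x * g}, orderOf y = 2 ∧
        ∃ W : Submodule F V, (∀ u ∈ W, ∀ w ∈ W, B u w = 0) ∧
          finrank F ↥W = 2 ∧ (∀ w ∈ W, y w ∈ W) ∧
          ¬ ∃ c : F, ∀ w ∈ W, y w = c • w := by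
  have σ2 : σ 2 = 2 := map_ofNat σ 2
  have s0 : ∀ {u v}, B u v = 0 → B v u = 0 := fun {u v} h => by rw [← hs, h, map_zero]
  have hA' : ∀ u v, B u (A v) = - B (A u) v := fun u v => by rw [hA, neg_neg]
  obtain ⟨f₂, hf₂⟩ : ∃ v, v = A f₁ := ⟨_, rfl⟩
  obtain ⟨f₃, hf₃⟩ : ∃ v, v = A f₂ := ⟨_, rfl⟩
  obtain ⟨e₁, he₁⟩ : ∃ v, v = A e₂ := ⟨_, rfl⟩
  have hAf₃ : A f₃ = 0 := by rw [hf₃, hf₂, hA3]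
  rw [← hf₂] at h12 h13 m2 m3
  rw [← hf₃] at h13 m3
  rw [← he₁] at he k21
  obtain ⟨γ, hγ⟩ : ∃ c, c = B f₁ f₃ := ⟨_, rfl⟩
  obtain ⟨α, hα⟩ : ∃ c, c = B e₂ e₁ := ⟨_, rfl⟩
  rw [← hγ] at h13
  rw [← hα] at k21
  -- the Gram matrix
  have g13 : B f₁ f₃ = γ := hγ.symm
  have g31 : B f₃ f₁ = γ := by rw [hf₃, hA, hf₂, hA, neg_neg, ← hf₂, ← hf₃, hγ]
  have g21 : B f₂ f₁ = 0 := s0 h12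
  have g22 : B f₂ f₂ = -γ := by rw [hf₂, hA, ← hf₂, ← hf₃, hγ]
  have g23 : B f₂ f₃ = 0 := by rw [hf₂, hA, hAf₃, map_zero, neg_zero]
  have g32 : B f₃ f₂ = 0 := s0 g23
  have g33 : B f₃ f₃ = 0 := by nth_rw 1 [hf₃]; rw [hA, hAf₃, map_zero, neg_zero]
  have k21' : B e₂ e₁ = α := hα.symm
  have k12' : B e₁ e₂ = -α := by rw [he₁, hA, ← he₁, hα]
  have k11 : B e₁ e₁ = 0 := by nth_rw 1 [he₁]; rw [hA, he, map_zero, neg_zero]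
  have l1 : B e₁ f₁ = 0 := by rw [he₁, hA, ← hf₂, m2, neg_zero]
  have l2 : B e₁ f₂ = 0 := by rw [he₁, hA, ← hf₃, m3, neg_zero]
  have l3 : B e₁ f₃ = 0 := by rw [he₁, hA, hAf₃, map_zero, neg_zero]
  have n11 := s0 l1
  have n21 := s0 l2
  have n31 := s0 l3
  have n12 := s0 m1
  have n22 := s0 m2
  have n32 := s0 m3
  have x1 : x f₁ = f₁ + f₂ + (1 / 2 : F) • f₃ := by rw [hxA, ← hf₂, ← hf₃]
  have x2 : x f₂ = f₂ + f₃ := by rw [hxA, ← hf₃, hAf₃, smul_zero, add_zero]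
  have x3 : x f₃ = f₃ := by rw [hxA, hAf₃, map_zero, smul_zero, add_zero, add_zero]
  have x4 : x e₁ = e₁ := by rw [hxA, he, map_zero, smul_zero, add_zero, add_zero]
  have x5 : x e₂ = e₂ + e₁ := by rw [hxA, ← he₁, he, smul_zero, add_zero]
  have hli : LinearIndependent F ![f₁, f₂, f₃, e₁, e₂] := by
    rw [Fintype.linearIndependent_iff]
    intro c hc
    simp only [Fin.sum_univ_five, Matrix.cons_val] at hc
    have p := fun v => congrArg (fun u => B u v) hc
    have p1 := p f₁
    have p2 := p f₂
    have p3 := p f₃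
    have p4 := p e₁
    have p5 := p e₂
    simp [h11, h12, g13, g21, g22, g23, g31, g32, g33, k11, k12', k21', k22, l1, l2, l3, m1, m2,
      m3, n11, n12, n21, n22, n31, n32, h13, k21] at p1 p2 p3 p4 p5
    intro i
    fin_cases i <;> assumption
  let b := basisOfLinearIndependentOfCardEqFinrank hli (by simp [hdim])
  have hb : ∀ i, b i = ![f₁, f₂, f₃, e₁, e₂] i := fun i => by
    simp [b]
  have b0 : b 0 = f₁ := hb 0
  have b1 : b 1 = f₂ := hb 1
  have b2 : b 2 = f₃ := hb 2
  have b3 : b 3 = e₁ := hb 3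
  have b4 : b 4 = e₂ := hb 4
  have comb : ∀ v, ∃ c : Fin 5 → F,
      v = c 0 • f₁ + c 1 • f₂ + c 2 • f₃ + c 3 • e₁ + c 4 • e₂ := fun v => ⟨b.repr v, by
    conv_lhs => rw [← b.sum_repr v, Fin.sum_univ_five, b0, b1, b2, b3, b4]⟩
  have hext : ∀ S T : V →ₗ[F] V, S f₁ = T f₁ → S f₂ = T f₂ → S f₃ = T f₃ → S e₁ = T e₁ →
      S e₂ = T e₂ → S = T := by
    intro S T q1 q2 q3 q4 q5
    apply b.ext
    intro i
    fin_cases i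
    · simpa [b0] using q1
    · simpa [b1] using q2
    · simpa [b2] using q3
    · simpa [b3] using q4
    · simpa [b4] using q5
  -- the Weyl element of `SL₂` acting on `Sym² ⊕` the natural module
  let M : Matrix (Fin 5) (Fin 5) F :=
    !![0, 0, 2, 0, 0; 0, -1, 0, 0, 0; 1 / 2, 0, 0, 0, 0; 0, 0, 0, 0, 1; 0, 0, 0, -1, 0]
  have hM : M.det = 1 := by
    simp [M, Matrix.det_succ_row_zero, Fin.sum_univ_succ, Fin.succAbove, h2]
  let g : V ≃ₗ[F] V := LinearMap.equivOfDetNeZero (Matrix.toLin b b M)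
    (by rw [LinearMap.det_toLin, hM]; exact one_ne_zero)
  have hgM : ∀ i, g (b i) = ∑ j, M j i • b j := fun i => Matrix.toLin_self b b M i
  have w1 : g f₁ = (1 / 2 : F) • f₃ := by
    have := hgM 0
    simpa [Fin.sum_univ_five, b0, b1, b2, b3, b4, M] using this
  have w2 : g f₂ = -f₂ := by
    have := hgM 1
    simpa [Fin.sum_univ_five, b0, b1, b2, b3, b4, M] using this
  have w3 : g f₃ = (2 : F) • f₁ := by
    have := hgM 2
    simpa [Fin.sum_univ_five, b0, b1, b2, b3, b4, M] using this
  have w4 : g e₁ = -e₂ := by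
    have := hgM 3
    simpa [Fin.sum_univ_five, b0, b1, b2, b3, b4, M] using this
  have w5 : g e₂ = e₁ := by
    have := hgM 4
    simpa [Fin.sum_univ_five, b0, b1, b2, b3, b4, M] using this
  have hg : g ∈ specialUnitaryGroupOf (fun u v => B u v) := by
    refine ⟨?_, fun u v => ?_⟩
    · ext
      rw [LinearEquiv.coe_det]
      exact (LinearMap.det_toLin b M).trans hM
    · obtain ⟨c, rfl⟩ := comb u
      obtain ⟨d, rfl⟩ := comb v
      simp [w1, w2, w3, w4, w5, h11, h12, g13, g21, g22, g23, g31, g32, g33, k11, k12', k21', k22,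
        l1, l2, l3, m1, m2, m3, n11, n12, n21, n22, n31, n32, σ2]
      field_simp
  have v1 : g⁻¹ f₁ = (1 / 2 : F) • f₃ := by
    apply g.injective
    change g (g.symm _) = _
    rw [g.apply_symm_apply, map_smul, w3, smul_smul]; simp [h2]
  have v2 : g⁻¹ f₂ = -f₂ := by
    apply g.injective
    change g (g.symm _) = _
    rw [g.apply_symm_apply, map_neg, w2, neg_neg]
  have v3 : g⁻¹ f₃ = (2 : F) • f₁ := by
    apply g.injective
    change g (g.symm _) = _
    rw [g.apply_symm_apply, map_smul, w1, smul_smul]; simp [h2]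
  have v4 : g⁻¹ e₁ = e₂ := by
    apply g.injective
    change g (g.symm _) = _
    rw [g.apply_symm_apply, w5]
  have v5 : g⁻¹ e₂ = -e₁ := by
    apply g.injective
    change g (g.symm _) = _
    rw [g.apply_symm_apply, map_neg, w4, neg_neg]
  -- in `SL₂`, the Weyl element is the product of `u`, its conjugate, and `u`
  have key : x * (g⁻¹ * x * g) * x = g := by
    apply LinearEquiv.toLinearMap_injective
    apply hext <;> simp only [LinearEquiv.coe_coe, LinearEquiv.mul_apply, x1, x2, x3, x4, x5, w1,
      w2, w3, w4, w5, v1, v2, v3, v4, v5, map_add, map_smul, map_neg]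
    all_goals match_scalars <;> (try field_simp) <;> (try ring)
  have z1 : (g ^ 2) f₃ = f₃ := by
    rw [pow_two, LinearEquiv.mul_apply, w3, map_smul, w1, smul_smul]; simp [h2]
  have z2 : (g ^ 2) e₁ = -e₁ := by
    rw [pow_two, LinearEquiv.mul_apply, w4, map_neg, w5]
  have he₁0 : e₁ ≠ 0 := fun h => by
    rw [h, map_zero] at k21'; exact k21 k21'.symm
  have hf₃0 : f₃ ≠ 0 := fun h => by
    rw [h, map_zero] at g13; exact h13 g13.symm
  have hneg : ∀ w : V, -w = w → w = 0 := fun w hw => by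
    have : (2 : F) • w = 0 := by
      rw [two_smul]; nth_rw 1 [← hw]; exact neg_add_cancel w
    exact (smul_eq_zero.1 this).resolve_left h2
  refine ⟨g, hg, g ^ 2, ?_, ?_, Submodule.span F {e₁, f₃}, ?_, ?_, ?_, ?_⟩
  · have hx : x ∈ Subgroup.closure {x, g⁻¹ * x * g} := Subgroup.subset_closure (by simp)
    have hxg : g⁻¹ * x * g ∈ Subgroup.closure {x, g⁻¹ * x * g} :=
      Subgroup.subset_closure (by simp)
    have := mul_mem (mul_mem hx hxg) hx
    rw [key] at this
    exact pow_mem this 2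
  · apply orderOf_eq_prime
    · apply LinearEquiv.toLinearMap_injective
      apply hext <;> simp only [pow_two, LinearEquiv.coe_coe, LinearEquiv.mul_apply, w1, w2, w3,
        w4, w5, map_smul, map_neg, neg_neg, smul_smul, LinearEquiv.coe_one, id_eq]
      all_goals first | done | (match_scalars; field_simp)
    · intro h
      rw [h] at z2
      exact he₁0 (hneg _ z2.symm)
  · intro u hu w hw
    obtain ⟨a, c, rfl⟩ := Submodule.mem_span_pair.1 hu
    obtain ⟨a', c', rfl⟩ := Submodule.mem_span_pair.1 hw
    simp [k11, l3, n31, g33]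
  · have hp : LinearIndependent F ![e₁, f₃] := by
      rw [LinearIndependent.pair_iff]
      intro s t hst
      have p1 := congrArg (fun u => B u e₂) hst
      have p2 := congrArg (fun u => B u f₁) hst
      simp [k12', n32, l1, g31, k21, h13] at p1 p2
      exact ⟨p1, p2⟩
    have := finrank_span_eq_card hp
    rwa [Matrix.range_cons_cons_empty, Fintype.card_fin] at this
  · intro u hu
    obtain ⟨a, c, rfl⟩ := Submodule.mem_span_pair.1 hu
    rw [map_add, map_smul, map_smul, z1, z2]
    exact Submodule.mem_span_pair.2 ⟨-a, c, by simp⟩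
  · rintro ⟨c, hc⟩
    have q1 := hc e₁ (Submodule.subset_span (by simp))
    have q2 := hc f₃ (Submodule.subset_span (by simp))
    rw [z2] at q1
    rw [z1] at q2
    have hc1 : c = 1 := by
      have : (c - 1) • f₃ = 0 := by rw [sub_smul, ← q2, one_smul, sub_self]
      exact sub_eq_zero.1 ((smul_eq_zero.1 this).resolve_right hf₃0)
    rw [hc1, one_smul] at q1
    exact he₁0 (hneg _ q1)

end UnitaryStab

theorem statement_13 (p f q : ℕ) (hp : p.Prime) (hq : q = p ^ f) (hf : 1 ≤ f)
    (F : Type) [Field F] [Fintype F] (hF : Fintype.card F = q ^ 2)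
    (V : Type) [AddCommGroup V] [Module F V] [FiniteDimensional F V]
    (n : ℕ) (hn : Module.finrank F V = n) (hn5 : 5 ≤ n) (hnodd : Odd n)
    -- `h` is a nondegenerate hermitian form on `V`
    (h : V → V → F)
    (hlin : ∀ v : V, IsLinearMap F (fun u => h u v))
    (hherm : ∀ u v : V, h u v = (h v u) ^ q)
    (hnd : ∀ v : V, (∀ u : V, h v u = 0) → v = 0)
    -- `x ∈ SU(V)` has order `p`
    (x : V ≃ₗ[F] V) (hxSU : x ∈ specialUnitaryGroupOf h) (hx : orderOf x = p) :
    -- (1) `x` stabilizes a nondegenerate one-dimensional subspace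
    (∃ v : V, h v v ≠ 0 ∧ x v ∈ Submodule.span F {v}) ∨
    -- (2) `x` stabilizes a maximal totally isotropic subspace, acting on it nontrivially
    (∃ W : Submodule F V, (∀ u ∈ W, ∀ w ∈ W, h u w = 0) ∧
      Module.finrank F ↥W = (n - 1) / 2 ∧ (∀ w ∈ W, x w ∈ W) ∧ (∃ w ∈ W, x w ≠ w)) ∨
    -- (3) `q` is odd and some `⟨x, x^g⟩` contains an involution stabilizing a maximal
    -- totally isotropic subspace and acting on it nonscalarly
    (Odd q ∧ ∃ g ∈ specialUnitaryGroupOf h,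
      ∃ y ∈ Subgroup.closure {x, g⁻¹ * x * g}, orderOf y = 2 ∧
        ∃ W : Submodule F V, (∀ u ∈ W, ∀ w ∈ W, h u w = 0) ∧
          Module.finrank F ↥W = (n - 1) / 2 ∧ (∀ w ∈ W, y w ∈ W) ∧
          ¬ ∃ c : F, ∀ w ∈ W, y w = c • w) := by
  classical
  have : Fact p.Prime := ⟨hp⟩
  have hF' : Fintype.card F = p ^ (f * 2) := by rw [hF, hq, pow_mul]
  have : CharP F p := charP_of_card_eq_prime_pow hF'
  have : ExpChar F p := ExpChar.prime hp
  have hq2 : 2 ≤ q := by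
    rw [hq]
    exact hp.two_le.trans (Nat.le_self_pow (by omega) p)
  obtain ⟨σ, hσq⟩ : ∃ σ : F →+* F, ∀ c, σ c = c ^ q :=
    ⟨iterateFrobenius F p f, fun c => by rw [iterateFrobenius_def, hq]⟩
  have hσ : ∀ c, σ (σ c) = c := fun c => by
    rw [hσq, hσq, ← pow_mul, ← pow_two, ← hF, FiniteField.pow_card]
  have hnorm : ∀ a, σ a = a → ∃ t, t * σ t = a := fun a ha => by
    obtain ⟨t, ht⟩ := UnitaryStab.exists_norm_eq hq2 hF a (by rw [← hσq, ha])
    exact ⟨t, by rw [hσq, ht]⟩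
  have htr : ∃ c, c + σ c ≠ 0 := by
    obtain ⟨c, hc⟩ := UnitaryStab.exists_trace_ne_zero hq2 hF
    exact ⟨c, by rwa [hσq]⟩
  let B : V →ₗ[F] V →ₛₗ[σ] F := LinearMap.mk₂'ₛₗ (RingHom.id F) σ h
    (fun u v w => (hlin w).map_add u v) (fun c u w => (hlin w).map_smul c u)
    (fun u v w => by
      rw [hherm, (hlin u).map_add, ← hσq, map_add, hσq, hσq, ← hherm, ← hherm])
    (fun c u w => by
      rw [hherm, (hlin u).map_smul, ← hσq, smul_eq_mul, map_mul, hσq (h w u), ← hherm, smul_eq_mul])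
  have hB : ∀ u v, B u v = h u v := fun _ _ => rfl
  have hs : ∀ u v, σ (B v u) = B u v := fun u v => by rw [hσq, hB, hB, ← hherm]
  have nd : ∀ v, (∀ u, B v u = 0) → v = 0 := fun v hv => hnd v hv
  obtain ⟨m, hm⟩ := hnodd
  have hnm : (n - 1) / 2 = m := by omega
  rw [hnm]
  have hxB : ∀ u v, B (x u) (x v) = B u v := hxSU.2
  by_contra hcon
  push Not at hcon
  obtain ⟨h1, hW, h3⟩ := hcon
  let N : Module.End F V := (x : V →ₗ[F] V) - 1
  have hNx : ∀ v, N v = x v - v := fun _ => rfl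
  have hxp : x ^ p = 1 := by rw [← hx, pow_orderOf_eq_one]
  have : Nontrivial V := Module.nontrivial_of_finrank_pos (R := F) (by omega)
  have hNp : N ^ p = 0 := by
    have : CharP (Module.End F V) p := charP_of_injective_algebraMap (algebraMap F (Module.End F V)).injective p
    have : (x : V →ₗ[F] V) ^ p = 1 := by
      ext v
      have h5 : ∀ k : ℕ, ((x : V →ₗ[F] V) ^ k) v = (x ^ k) v := by
        intro k
        induction k with
        | zero => rfl
        | succ k ih => rw [pow_succ', pow_succ', Module.End.mul_apply, ih]; rfl
      rw [h5, hxp]; rfl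
    rw [sub_pow_expChar_of_commute p (Commute.one_right _), this, one_pow, sub_self]
  have hN : IsNilpotent N := ⟨p, hNp⟩
  have hself : ∀ v ∈ LinearMap.ker N, B v v = 0 := fun v hv => by
    by_contra hne
    apply h1 v hne
    have hv' : N v = 0 := hv
    rw [hNx, sub_eq_zero] at hv'
    rw [hv']
    exact Submodule.mem_span_singleton_self v
  have hK : ∀ v w, N v = 0 → N w = 0 → B v w = 0 := fun v w hv hw =>
    UnitaryStab.isotropic_of_self hs htr hself v hv w hw
  have hext : ∀ U : Submodule F V, (∀ u ∈ U, ∀ w ∈ U, B u w = 0) → (∀ u ∈ U, x u ∈ U) →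
      ∃ W : Submodule F V, U ≤ W ∧ (∀ u ∈ W, N u = 0) ∧ m ≤ Module.finrank F W := by
    intro U hU hxU
    obtain ⟨W, hUW, hWi, hxW, hWd⟩ :=
      UnitaryStab.exists_isotropic_extension B hs hσ nd hnorm x hxB hN _ U rfl hU hxU
    have hle := UnitaryStab.two_mul_finrank_isotropic_le B hs hσ nd hWi
    refine ⟨W, hUW, fun u hu => ?_, by omega⟩
    rw [hNx, hW W hWi (by omega) hxW u hu, sub_self]
  obtain ⟨f₀, hf₀, hN3, hr⟩ := UnitaryStab.jordan_structure B hs hσ nd x hxB N hNx hN m (by omega) hK hext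
  have hp2 : p ≠ 2 := fun h => by
    apply hf₀
    have : (N ^ p) f₀ = 0 := by rw [hNp]; rfl
    rwa [h, pow_two] at this
  have hqodd : Odd q := by
    rw [hq]
    exact (hp.odd_of_ne_two hp2).pow
  have h2 : (2 : F) ≠ 0 := Ring.two_ne_zero (by rwa [ringChar.eq F p])
  -- `A` is the logarithm of `x`, truncated because `N³ = 0`
  let A : V →ₗ[F] V := N - (1 / 2 : F) • (N * N)
  have hAN : ∀ v, A v = N v - (1 / 2 : F) • N (N v) := fun _ => rfl
  have hNA : ∀ v, N (A v) = N (N v) := fun v => by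
    rw [hAN, map_sub, map_smul, hN3, smul_zero, sub_zero]
  have hA2 : ∀ v, A (A v) = N (N v) := fun v => by
    rw [hAN (A v), hNA, hN3, smul_zero, sub_zero]
  have hA0 : ∀ v, A v = 0 → N v = 0 := fun v hv => by
    have h5 : N (N v) = 0 := by rw [← hNA, hv, map_zero]
    rw [hAN, h5, smul_zero, sub_zero] at hv
    exact hv
  have hxA : ∀ v, x v = v + A v + (1 / 2 : F) • A (A v) := fun v => by
    rw [hA2, hAN, hNx v]; abel
  have hA3 : ∀ v, A (A (A v)) = 0 := fun v => by
    rw [hA2, hNA, hN3]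
  -- the inverse of `1 + N` is `1 - N + N²`
  have hNadj : ∀ u v, B (N u) v = B u (N (N v)) - B u (N v) := by
    intro u v
    have h5 : x (v - N v + N (N v)) = v := by
      have h6 : ∀ w, x w = w + N w := fun w => by rw [hNx]; abel
      rw [h6, map_add, map_sub, hN3]; abel
    have h7 : B (x u) v = B u (v - N v + N (N v)) := by
      rw [← hxB u, h5]
    rw [hNx u, map_sub, LinearMap.sub_apply, h7, map_add, map_sub]
    ring
  have hA : ∀ u v, B (A u) v = - B u (A v) := by
    intro u v
    have σ2 : σ 2 = 2 := map_ofNat σ 2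
    rw [hAN, hAN]
    simp only [map_sub, LinearMap.sub_apply, map_smul, LinearMap.smul_apply, map_smulₛₗ, hNadj,
      hN3, map_zero, map_div₀, map_one, σ2, smul_eq_mul]
    field_simp
    ring
  have hiso : ∀ v, A v ≠ 0 → A (A v) = 0 → B v v = 0 → B v (A v) ≠ 0 := by
    intro v hAv hAAv hvv hvAv
    have e1 : B (A v) v = 0 := by rw [← hs, hvAv, map_zero]
    have e2 : B (A v) (A v) = 0 := by rw [hA, hAAv, map_zero, neg_zero]
    have hxv : x v = v + A v := by rw [hxA, hAAv, smul_zero, add_zero]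
    obtain ⟨W, hUW, hWN, -⟩ := hext (Submodule.span F {v, A v}) (by
      intro u hu w hw
      obtain ⟨a, c, rfl⟩ := Submodule.mem_span_pair.1 hu
      obtain ⟨a', c', rfl⟩ := Submodule.mem_span_pair.1 hw
      simp [hvv, hvAv, e1, e2]) (by
      intro u hu
      obtain ⟨a, c, rfl⟩ := Submodule.mem_span_pair.1 hu
      have hxAv : x (A v) = A v := by
        rw [hxA, hAAv, map_zero, smul_zero, add_zero, add_zero]
      rw [map_add, map_smul, map_smul, hxv, hxAv]
      exact Submodule.mem_span_pair.2 ⟨a, a + c, by module⟩)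
    have h5 := hWN v (hUW (Submodule.subset_span (by simp)))
    rw [hNx, hxv, add_sub_cancel_left] at h5
    exact hAv h5
  obtain ⟨hd5, f₁, e₂, a1, a2, a3, a4, a5, a6, a7, a8, a9⟩ := UnitaryStab.exists_normal_form B hs nd hnorm h2
    (by omega) A hA f₀ (by rwa [hA2]) hA3 (fun v => by rw [hA2, hA2]; exact hr v)
    (fun v w hv hw => hK v w (hA0 v hv) (hA0 w hw)) hiso
  obtain ⟨g, hg, y, hy, hy2, W, hWi, hWd, hyW, hyc⟩ := UnitaryStab.involution_of_normal_form B hs h2 hd5 A hA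
    hA3 x hxA f₁ e₂ a1 a2 a3 a4 a5 a6 a7 a8 a9
  obtain ⟨c, hc⟩ := h3 hqodd g hg y hy hy2 W hWi (by omega) hyW
  exact hyc ⟨c, hc⟩
end
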